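/- Let i be a vertex with λ_i = 0 and (α,ε_i) > 0. Then every Π^λ-module of dimension vector α has the simple module S_i (of dimension vector ε_i, with all arrows acting as zero) as a composition factor, and there is an isomorphism of varieties N(λ, α − ε_i) ≅ N(λ,α). -/

import Mathlib

open scoped BigOperators

noncomputable section

/-- A quiver with a finite vertex set `I` and a finite arrow set `A`;
`h a` and `t a` are the head and the tail of the arrow `a`. -/
structure FinQuiver where
  I : Type
  [fintypeI : Fintype I]
  [decEqI : DecidableEq I]
  A : Type
  [fintypeA : Fintype A]
  h : A → I
  t : A → I

attribute [instance] FinQuiver.fintypeI FinQuiver.decEqI FinQuiver.fintypeA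

namespace FinQuiver

variable (Q : FinQuiver)

/-- Arrows of the double quiver `Q̄` : every arrow `a : i → j` of `Q` (as `Sum.inl a`)
together with a reverse arrow `a* : j → i` (as `Sum.inr a`). -/
@[reducible] def DA : Type := Q.A ⊕ Q.A

instance : Fintype Q.DA := inferInstanceAs (Fintype (Q.A ⊕ Q.A))

/-- Head of an arrow of the double quiver. -/
@[reducible] def dh : Q.DA → Q.I := fun a => match a with
  | Sum.inl a => Q.h a
  | Sum.inr a => Q.t a

/-- Tail of an arrow of the double quiver. -/
@[reducible] def dt : Q.DA → Q.I := fun a => match a with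
  | Sum.inl a => Q.t a
  | Sum.inr a => Q.h a

/-- The symmetric bilinear form
`(α,β) = ∑_{i∈I} 2 α_i β_i − ∑_{a∈Q̄} α_{h(a)} β_{t(a)}` on `ℤ^I`. -/
def bil (α β : Q.I → ℤ) : ℤ :=
  (∑ i, 2 * α i * β i) - ∑ a : Q.DA, α (Q.dh a) * β (Q.dt a)

/-- `p(α) = 1 − q(α) = 1 − α·α + ∑_{a ∈ Q} α_{t(a)} α_{h(a)}`. -/
def pp (α : Q.I → ℤ) : ℤ :=
  1 - (∑ i, α i * α i) + ∑ a : Q.A, α (Q.t a) * α (Q.h a)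

/-- The coordinate vector `ε_i` at a vertex `i`. -/
def ev (i : Q.I) : Q.I → ℤ := fun j => if j = i then 1 else 0

/-- The coordinate vector of a vertex, as a vector of natural numbers. -/
def evN (i : Q.I) : Q.I → ℕ := fun j => if j = i then 1 else 0

/-- A vertex is loopfree if no arrow has both its head and its tail there. -/
def Loopfree (i : Q.I) : Prop := ∀ a : Q.A, ¬ (Q.h a = i ∧ Q.t a = i)

/-- The reflection `s_i(α) = α − (α,ε_i) ε_i` at a (loopfree) vertex `i`. -/
def refl (i : Q.I) (α : Q.I → ℤ) : Q.I → ℤ := α - Q.bil α (Q.ev i) • Q.ev i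

/-- Two vertices are joined by some arrow. -/
def Adj (i j : Q.I) : Prop :=
  ∃ a : Q.A, (Q.h a = i ∧ Q.t a = j) ∨ (Q.h a = j ∧ Q.t a = i)

/-- The quiver is connected. -/
def Connected : Prop := ∀ i j : Q.I, Relation.ReflTransGen Q.Adj i j

/-- The support of the vector `α` is connected in `Q`. -/
def SuppConnected (α : Q.I → ℤ) : Prop :=
  ∀ i j : Q.I, α i ≠ 0 → α j ≠ 0 →
    Relation.ReflTransGen (fun x y => α x ≠ 0 ∧ α y ≠ 0 ∧ Q.Adj x y) i j

/-- The fundamental region: nonzero nonnegative vectors with connected support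
such that `(α, ε_i) ≤ 0` for every vertex `i`. -/
def InFund (α : Q.I → ℤ) : Prop :=
  α ≠ 0 ∧ (∀ i, 0 ≤ α i) ∧ Q.SuppConnected α ∧ ∀ i, Q.bil α (Q.ev i) ≤ 0

/-- The roots of the Kac root system attached to `Q` : the real roots form the orbit
of the simple roots (coordinate vectors at loopfree vertices) under the reflections at
loopfree vertices, and the imaginary roots form the orbit of `±(fundamental region)`
under these reflections. -/
inductive IsRoot : (Q.I → ℤ) → Prop
  | simple (i : Q.I) (hi : Q.Loopfree i) : IsRoot (Q.ev i)
  | fund (α : Q.I → ℤ) (hα : Q.InFund α) : IsRoot α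
  | neg_fund (α : Q.I → ℤ) (hα : Q.InFund α) : IsRoot (-α)
  | reflect (i : Q.I) (hi : Q.Loopfree i) (α : Q.I → ℤ) (hα : IsRoot α) :
      IsRoot (Q.refl i α)

/-- Positive roots: roots all of whose components are nonnegative. -/
def IsPosRoot (α : Q.I → ℤ) : Prop := Q.IsRoot α ∧ (∀ i, 0 ≤ α i) ∧ α ≠ 0

/-- The Tits form is positive semidefinite. -/
def PosSemidef : Prop := ∀ α : Q.I → ℤ, 0 ≤ Q.bil α α

/-- The Tits form is positive definite. -/
def PosDef : Prop := Q.PosSemidef ∧ ∀ α : Q.I → ℤ, Q.bil α α = 0 → α = 0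

/-- Dynkin quivers: connected, with positive definite Tits form. -/
def IsDynkin : Prop := Q.Connected ∧ Q.PosDef

/-- Extended Dynkin quivers: connected, with positive semidefinite but not
positive definite Tits form. -/
def IsExtDynkin : Prop := Q.Connected ∧ Q.PosSemidef ∧ ¬ Q.PosDef

/-- `δ` is the minimal positive imaginary root of an extended Dynkin quiver:
the minimal nonzero nonnegative vector in the radical of the Tits form. -/
def IsMinImag (δ : Q.I → ℤ) : Prop :=
  (∀ i, 0 ≤ δ i) ∧ δ ≠ 0 ∧ (∀ i, Q.bil δ (Q.ev i) = 0) ∧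
    ∀ β : Q.I → ℤ, (∀ i, 0 ≤ β i) → β ≠ 0 → (∀ i, Q.bil β (Q.ev i) = 0) →
      ∀ i, δ i ≤ β i

/-- The subquiver of `Q` on a subset `S` of vertices and a subset `B` of arrows. -/
def restrict (S : Set Q.I) (B : Set Q.A) (hh : ∀ a ∈ B, Q.h a ∈ S)
    (ht : ∀ a ∈ B, Q.t a ∈ S) : FinQuiver :=
  { I := S
    fintypeI := Fintype.ofFinite S
    decEqI := Classical.decEq _
    A := B
    fintypeA := Fintype.ofFinite B
    h := fun a => ⟨Q.h a.1, hh a.1 a.2⟩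
    t := fun a => ⟨Q.t a.1, ht a.1 a.2⟩ }

/-- The support quiver of a vector: the full subquiver on the support of `β`. -/
def suppQuiver (β : Q.I → ℤ) : FinQuiver :=
  Q.restrict {i | β i ≠ 0} {a | β (Q.h a) ≠ 0 ∧ β (Q.t a) ≠ 0}
    (fun _ ha => ha.1) (fun _ ha => ha.2)

/-- A dimension vector (of natural numbers), viewed in `ℤ^I`. -/
def toZ (α : Q.I → ℕ) : Q.I → ℤ := fun i => (α i : ℤ)

/-- An oriented cycle in the double quiver `Q̄`, consisting of `n+1` arrows,
the tail of each arrow being the head of the (cyclically) next one. -/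
structure Cyc (Q' : FinQuiver) where
  n : ℕ
  ar : Fin (n + 1) → Q'.DA
  compat : ∀ i : Fin (n + 1), Q'.dt (ar i) = Q'.dh (ar (i + 1))

section WithField

variable (K : Type) [Field K]

/-- `λ·α = ∑_i λ_i α_i`. -/
def pair (l : Q.I → K) (α : Q.I → ℤ) : K := ∑ i, l i * (α i : K)

/-- `R_λ^+`, the set of positive roots `α` with `λ·α = 0`. -/
def Rplus (l : Q.I → K) : Set (Q.I → ℤ) :=
  {α | Q.IsPosRoot α ∧ Q.pair K l α = 0}

/-- `ℕ R_λ^+`, the set of sums (including the empty sum `0`) of elements of `R_λ^+`. -/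
def NRplus (l : Q.I → K) : Set (Q.I → ℤ) :=
  (AddSubmonoid.closure (Q.Rplus K l) : AddSubmonoid (Q.I → ℤ))

/-- `Σ_λ` : the elements `α ∈ R_λ^+` with `p(α) > ∑ p(β⁽ᵗ⁾)` for every decomposition
of `α` as a sum of at least two elements `β⁽ᵗ⁾` of `R_λ^+`. -/
def SigmaSet (l : Q.I → K) : Set (Q.I → ℤ) :=
  {α | α ∈ Q.Rplus K l ∧
    ∀ (n : ℕ) (β : Fin n → (Q.I → ℤ)), 2 ≤ n → (∀ j, β j ∈ Q.Rplus K l) →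
      α = ∑ j, β j → (∑ j, Q.pp (β j)) < Q.pp α}

/-- The dual reflection `r_i(λ)_j = λ_j − (ε_i,ε_j) λ_i`. -/
def coRefl (i : Q.I) (l : Q.I → K) : Q.I → K :=
  fun j => l j - (Q.bil (Q.ev i) (Q.ev j) : ℤ) * l i

/-- A single admissible reflection applied to the pair `(λ, α)`:
a reflection at a loopfree vertex `i` with `λ_i ≠ 0`. -/
def AdmStep (x y : (Q.I → K) × (Q.I → ℤ)) : Prop :=
  ∃ i : Q.I, Q.Loopfree i ∧ x.1 i ≠ 0 ∧ y.1 = Q.coRefl K i x.1 ∧ y.2 = Q.refl i x.2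

/-- `(ν,β)` is obtained from `(λ,α)` by a sequence of admissible reflections:
the two pairs lie in the same class of the equivalence relation generated by
admissible reflections. -/
def AdmEquiv (x y : (Q.I → K) × (Q.I → ℤ)) : Prop :=
  Relation.EqvGen (Q.AdmStep K) x y

/-- The space `Rep(Q̄,α)` of representations of the double quiver. -/
def Rep (α : Q.I → ℕ) : Type :=
  ∀ a : Q.DA, Matrix (Fin (α (Q.dh a))) (Fin (α (Q.dt a))) K

/-- The moment map
`μ_α(x)_i = ∑_{a∈Q, h(a)=i} x_a x_{a*} − ∑_{a∈Q, t(a)=i} x_{a*} x_a`. -/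
def moment (α : Q.I → ℕ) (x : Q.Rep K α) (i : Q.I) :
    Matrix (Fin (α i)) (Fin (α i)) K :=
  (∑ a : Q.A, if h : Q.h a = i then
      (x (Sum.inl a) * x (Sum.inr a)).submatrix
        (Fin.cast (congrArg α h).symm) (Fin.cast (congrArg α h).symm)
    else 0)
  - ∑ a : Q.A, if h : Q.t a = i then
      (x (Sum.inr a) * x (Sum.inl a)).submatrix
        (Fin.cast (congrArg α h).symm) (Fin.cast (congrArg α h).symm)
    else 0

/-- The fibre `μ_α^{-1}(λ)` of the moment map over (the central element
corresponding to) `λ`. -/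
def MomentFiber (l : Q.I → K) (α : Q.I → ℕ) : Set (Q.Rep K α) :=
  {x | ∀ i : Q.I, Q.moment K α x i = l i • (1 : Matrix (Fin (α i)) (Fin (α i)) K)}

/-- The group `∏_i GL(α_i,K)`; it acts on `Rep(Q̄,α)` by conjugation, with the same
orbits and the same invariant functions as `G(α) = (∏_i GL(α_i,K))/K^*`. -/
def Gl (α : Q.I → ℕ) : Type := ∀ i : Q.I, Matrix.GeneralLinearGroup (Fin (α i)) K

/-- The conjugation action of `∏_i GL(α_i,K)` on `Rep(Q̄,α)`. -/
def glAct (α : Q.I → ℕ) (g : Q.Gl K α) (x : Q.Rep K α) : Q.Rep K α :=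
  fun a => (g (Q.dh a) : Matrix (Fin (α (Q.dh a))) (Fin (α (Q.dh a))) K) * x a *
    (((g (Q.dt a))⁻¹ : Matrix.GeneralLinearGroup (Fin (α (Q.dt a))) K) :
      Matrix (Fin (α (Q.dt a))) (Fin (α (Q.dt a))) K)

/-- Coordinates on `Rep(Q̄,α)`: matrix entries. -/
def Coords (α : Q.I → ℕ) : Type :=
  Σ a : Q.DA, Fin (α (Q.dh a)) × Fin (α (Q.dt a))

/-- The coordinate ring `K[V]` of a subset `V` of `Rep(Q̄,α)` : the algebra of
`K`-valued functions on `V` which are restrictions of polynomial functions. -/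
def fnRing (α : Q.I → ℕ) (V : Set (Q.Rep K α)) : Subalgebra K (↥V → K) :=
  (MvPolynomial.aeval
    (fun c : Q.Coords α => fun v : ↥V => v.1 c.1 c.2.1 c.2.2) :
    MvPolynomial (Q.Coords α) K →ₐ[K] (↥V → K)).range

end WithField

end FinQuiver

/-- The subalgebra of functions invariant under a relation (e.g. the orbit
relation of a group action). -/
def relInv (K : Type) [Field K] {V : Type} (R : V → V → Prop) :
    Subalgebra K (V → K) where
  carrier := {f | ∀ x y : V, R x y → f x = f y}
  mul_mem' := by
    intro f g hf hg x y hxy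
    simp only [Pi.mul_apply, hf x y hxy, hg x y hxy]
  one_mem' := fun x y _ => rfl
  add_mem' := by
    intro f g hf hg x y hxy
    simp only [Pi.add_apply, hf x y hxy, hg x y hxy]
  zero_mem' := fun x y _ => rfl
  algebraMap_mem' := fun c x y _ => rfl

namespace FinQuiver

variable (Q : FinQuiver) (K : Type) [Field K]

/-- The coordinate ring of the Marsden–Weinstein reduction
`N(λ,α) = μ_α^{-1}(λ) ⫽ G(α)` : the `G(α)`-invariant functions in the coordinate
ring of `μ_α^{-1}(λ)`.  Two such reductions are isomorphic as (affine) varieties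
exactly when these `K`-algebras are isomorphic. -/
def InvRing (l : Q.I → K) (α : Q.I → ℕ) :
    Subalgebra K (↥(Q.MomentFiber K l α) → K) :=
  Q.fnRing K α (Q.MomentFiber K l α) ⊓
    relInv K (fun x y : ↥(Q.MomentFiber K l α) =>
      ∃ g : Q.Gl K α, y.1 = Q.glAct K α g x.1)

/-- Index type for a product `∏_t X_t^{m_t}`. -/
@[reducible] def SymIdx (s : ℕ) (m : Fin s → ℕ) : Type := Σ t : Fin s, Fin (m t)

/-- The product `∏_{t} Rep(Q̄, d_t)^{m_t}` of representation spaces. -/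
def SymRep (s : ℕ) (m : Fin s → ℕ) (d : Fin s → (Q.I → ℕ)) : Type :=
  ∀ p : SymIdx s m, Q.Rep K (d p.1)

/-- The product `∏_t μ_{d_t}^{-1}(λ)^{m_t}` of moment map fibres. -/
def SymFiber (s : ℕ) (m : Fin s → ℕ) (d : Fin s → (Q.I → ℕ)) (l : Q.I → K) :
    Set (Q.SymRep K s m d) :=
  {x | ∀ p : SymIdx s m, x p ∈ Q.MomentFiber K l (d p.1)}

/-- Polynomial functions on the product of fibres. -/
def symFnRing (s : ℕ) (m : Fin s → ℕ) (d : Fin s → (Q.I → ℕ)) (l : Q.I → K) :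
    Subalgebra K (↥(Q.SymFiber K s m d l) → K) :=
  (MvPolynomial.aeval
    (fun c : Σ p : SymIdx s m, Q.Coords (d p.1) =>
      fun v : ↥(Q.SymFiber K s m d l) => v.1 c.1 c.2.1 c.2.2.1 c.2.2.2) :
    MvPolynomial (Σ p : SymIdx s m, Q.Coords (d p.1)) K →ₐ[K]
      (↥(Q.SymFiber K s m d l) → K)).range

/-- The componentwise action of the product of the groups `∏ GL(d_t)^{m_t}`. -/
def symGlAct (s : ℕ) (m : Fin s → ℕ) (d : Fin s → (Q.I → ℕ))
    (g : ∀ p : SymIdx s m, Q.Gl K (d p.1)) (x : Q.SymRep K s m d) :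
    Q.SymRep K s m d :=
  fun p => Q.glAct K (d p.1) (g p) (x p)

/-- The action of `∏_t S_{m_t}` permuting the factors of each `X_t^{m_t}`. -/
def symPermAct (s : ℕ) (m : Fin s → ℕ) (d : Fin s → (Q.I → ℕ))
    (π : ∀ t : Fin s, Equiv.Perm (Fin (m t))) (x : Q.SymRep K s m d) :
    Q.SymRep K s m d :=
  fun p => x ⟨p.1, π p.1 p.2⟩

/-- The coordinate ring of the product of symmetric products
`∏_t S^{m_t} N(λ, d_t)` of Marsden–Weinstein reductions: functions on
`∏_t μ_{d_t}^{-1}(λ)^{m_t}` which are polynomial, invariant under all the groups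
`G(d_t)` acting on the separate factors, and symmetric under permutations of the
`m_t` factors of each type `t`. -/
def SymInvRing (s : ℕ) (m : Fin s → ℕ) (d : Fin s → (Q.I → ℕ)) (l : Q.I → K) :
    Subalgebra K (↥(Q.SymFiber K s m d l) → K) :=
  Q.symFnRing K s m d l ⊓
    relInv K (fun x y : ↥(Q.SymFiber K s m d l) =>
      ∃ g : ∀ p : SymIdx s m, Q.Gl K (d p.1), y.1 = Q.symGlAct K s m d g x.1) ⊓
    relInv K (fun x y : ↥(Q.SymFiber K s m d l) =>
      ∃ π : ∀ t : Fin s, Equiv.Perm (Fin (m t)), y.1 = Q.symPermAct K s m d π x.1)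

/-- The trace function `tr_p` of an oriented cycle `p` in `Q̄` :
`tr_p(x) = tr(x_{a_1} ⋯ x_{a_ℓ})`, written out via matrix entries. -/
def cycTr (α : Q.I → ℕ) (p : Q.Cyc) (x : Q.Rep K α) : K :=
  ∑ c : ∀ i : Fin (p.n + 1), Fin (α (Q.dh (p.ar i))),
    ∏ i : Fin (p.n + 1),
      x (p.ar i) (c i) (Fin.cast (congrArg α (p.compat i)).symm (c (i + 1)))

/-- `U` is a subrepresentation of the `Π^λ`-module given by the point
`x ∈ Rep(Q̄,α)` : a collection of subspaces stable under all the maps `x_a`. -/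
def SubRep (α : Q.I → ℕ) (x : Q.Rep K α)
    (U : ∀ i : Q.I, Submodule K (Fin (α i) → K)) : Prop :=
  ∀ a : Q.DA, ∀ v ∈ U (Q.dt a), (x a).mulVec v ∈ U (Q.dh a)

/-- The module given by `x` has the simple module `S_{i₀}` (dimension vector
`ε_{i₀}`, all arrows acting as zero) as a composition factor: it has a subquotient
of dimension vector `ε_{i₀}` on which all arrows act as zero. -/
def HasSFactor (α : Q.I → ℕ) (i0 : Q.I) (x : Q.Rep K α) : Prop :=
  ∃ U W : ∀ i : Q.I, Submodule K (Fin (α i) → K),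
    Q.SubRep K α x U ∧ Q.SubRep K α x W ∧ (∀ i, U i ≤ W i) ∧
    (∀ i, Module.finrank K (W i) =
      Module.finrank K (U i) + (if i = i0 then 1 else 0)) ∧
    (∀ a : Q.DA, Q.dh a = i0 → Q.dt a = i0 →
      ∀ v ∈ W (Q.dt a), (x a).mulVec v ∈ U (Q.dh a))

/-- `W/U` is a simple subquotient of the module given by `x`; the simple
subquotients of a module are, up to isomorphism, exactly its composition factors. -/
def SimpleSubquot (α : Q.I → ℕ) (x : Q.Rep K α)
    (U W : ∀ i : Q.I, Submodule K (Fin (α i) → K)) : Prop :=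
  Q.SubRep K α x U ∧ Q.SubRep K α x W ∧ (∀ i, U i ≤ W i) ∧ U ≠ W ∧
    ∀ V : ∀ i : Q.I, Submodule K (Fin (α i) → K),
      Q.SubRep K α x V → (∀ i, U i ≤ V i) → (∀ i, V i ≤ W i) → V = U ∨ V = W

/-- The direct sum map `∏_{j=1}^m Rep(Q̄,δ) → Rep(Q̄,mδ)` (block diagonal). -/
def dsMap (δ : Q.I → ℕ) (m : ℕ) (y : Fin m → Q.Rep K δ) :
    Q.Rep K (fun i => m * δ i) :=
  fun a => Matrix.of fun r c =>
    if (finProdFinEquiv.symm r).1 = (finProdFinEquiv.symm c).1 then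
      y (finProdFinEquiv.symm r).1 a (finProdFinEquiv.symm r).2
        (finProdFinEquiv.symm c).2
    else 0

end FinQuiver

/-
The composite of the maps out of and into `i0` is `λ_{i0} = 0`, and `(α, ε_{i0}) > 0` says that the
intermediate space has dimension less than `2 α_{i0}`. So by a rank count some nonzero vector is
killed by all arrows out of `i0`, or some nonzero linear form by all arrows into `i0`: the module
has `S_{i0}` as a submodule or as a quotient. By the first fundamental theorem for `GL(α_{i0})`, an
invariant function depends only on the arrows away from `i0` and on the composites of length two
through `i0`, since `i0` has no loops. Splitting off `S_{i0}` changes none of these, so restriction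
along `z ↦ z ⊕ S_{i0}` is an isomorphism of rings of invariants.
-/

/-! ### The first fundamental theorem for the general linear group -/

section Reynolds

variable {k G V W : Type*} [Field k] [Group G] [AddCommGroup V] [Module k V]
  [AddCommGroup W] [Module k W]

lemma span_rho_sub_self_le_comap (ρ : Representation k G V) (u : V) (g : G) :
    Submodule.span k (Set.range fun h => ρ h u - u) ≤
      (Submodule.span k (Set.range fun h => ρ h u - u)).comap (ρ g) := by
  refine Submodule.span_le.2 ?_
  rintro _ ⟨h, rfl⟩
  have hgh : ρ g (ρ h u - u) = (ρ (g * h) u - u) - (ρ g u - u) := by simp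
  rw [SetLike.mem_coe, Submodule.mem_comap, hgh]
  exact sub_mem (Submodule.subset_span ⟨g * h, rfl⟩) (Submodule.subset_span ⟨g, rfl⟩)

/- The orthogonal complement of `D = span {ρ g u - u}` is stable, so the component of `u` in it
is moved by every `ρ g` inside `D ∩ Dᗮ = 0`. -/
theorem exists_invariant_map_eq [FiniteDimensional k V] (ρ : Representation k G V)
    (B : LinearMap.BilinForm k V) (hB : B.IsRefl) (hB0 : ∀ x, B x x = 0 → x = 0)
    (hρ : ∀ g, ∃ g', ∀ x y, B x (ρ g y) = B (ρ g' x) y) (φ : V →ₗ[k] W) (u : V)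
    (hφ : ∀ g, φ (ρ g u) = φ u) :
    ∃ v, (∀ g, ρ g v = v) ∧ φ v = φ u := by
  set D := Submodule.span k (Set.range fun g => ρ g u - u)
  have hdisj : Disjoint D (B.orthogonal D) :=
    Submodule.disjoint_def.2 fun x hx hx' => hB0 x (hx' x hx)
  have hcompl := (LinearMap.BilinForm.isCompl_orthogonal_iff_disjoint hB).2 hdisj
  obtain ⟨d, hd, v, hv, hdv⟩ :=
    Submodule.mem_sup.1 (hcompl.sup_eq_top.ge (Submodule.mem_top (x := u)))
  refine ⟨v, fun g => ?_, ?_⟩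
  · have hgD : ρ g v - v ∈ D := by
      have hgu : ρ g v - v = (ρ g u - u) + d - ρ g d := by rw [← hdv, map_add]; abel
      rw [hgu]
      exact sub_mem (add_mem (Submodule.subset_span ⟨g, rfl⟩) hd)
        (span_rho_sub_self_le_comap ρ u g hd)
    have hgD' : ρ g v - v ∈ B.orthogonal D := by
      obtain ⟨g', hg'⟩ := hρ g
      refine sub_mem (fun x hx => ?_) hv
      exact (hg' x v).trans (hv _ (span_rho_sub_self_le_comap ρ u g' hx))
    exact sub_eq_zero.1 (Submodule.disjoint_def.1 hdisj _ hgD hgD')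
  · have hker : D ≤ LinearMap.ker φ := by
      refine Submodule.span_le.2 ?_
      rintro _ ⟨g, rfl⟩
      simp [hφ g]
    rw [← hdv, map_add, show φ d = 0 from hker hd, zero_add]

end Reynolds

section DoubleCommutant

variable {k G V : Type*} [Field k] [Group G] [AddCommGroup V] [Module k V]

theorem mem_range_asAlgebraHom_of_commute [FiniteDimensional k V] (ρ : Representation k G V)
    [ρ.IsSemisimpleRepresentation] (T : Module.End k V)
    (hT : ∀ f : Module.End k V, (∀ g, Commute f (ρ g)) → Commute T f) :
    T ∈ Set.range ρ.asAlgebraHom := by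
  have : IsSemisimpleModule (MonoidAlgebra k G) ρ.asModule :=
    (Representation.isSemisimpleRepresentation_iff_isSemisimpleModule_asModule ρ).1 ‹_›
  have : Module.Finite k ρ.asModule := Module.Finite.equiv ρ.asModuleEquiv.symm
  have : Module.Finite (Module.End (MonoidAlgebra k G) ρ.asModule) ρ.asModule :=
    Module.Finite.of_restrictScalars_finite k _ _
  have hTφ (φ : Module.End (MonoidAlgebra k G) ρ.asModule) (v : V) :
      ρ.asModuleEquiv.symm (T (ρ.asModuleEquiv (φ (ρ.asModuleEquiv.symm v)))) =
        φ (ρ.asModuleEquiv.symm (T v)) := by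
    let ψ := (Representation.IntertwiningMap.equivAlgEnd ρ).symm φ
    exact LinearMap.congr_fun
      (hT ψ.toLinearMap fun g => LinearMap.ext fun w => ψ.isIntertwining _ _ g w) v
  let F : Module.End (Module.End (MonoidAlgebra k G) ρ.asModule) ρ.asModule :=
    { toFun := fun v => ρ.asModuleEquiv.symm (T (ρ.asModuleEquiv v))
      map_add' := by simp
      map_smul' := fun φ v => hTφ φ (ρ.asModuleEquiv v) }
  obtain ⟨r, hr⟩ := Module.Finite.toModuleEnd_moduleEnd_surjective F
  refine ⟨r, LinearMap.ext fun v => ?_⟩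
  calc ρ.asAlgebraHom r v = ρ.asModuleEquiv (r • ρ.asModuleEquiv.symm v) := by
        rw [ρ.asModuleEquiv_map_smul, LinearEquiv.apply_symm_apply]
    _ = T v := congrArg ρ.asModuleEquiv (LinearMap.congr_fun hr (ρ.asModuleEquiv.symm v))

end DoubleCommutant

section SymmetricTensors

variable {k δ E : Type*} [Fintype δ]

lemma exists_perm_of_sum_single_eq (x y : δ → E)
    (h : ∑ s, Finsupp.single (x s) 1 = ∑ s, Finsupp.single (y s) (1 : ℕ)) :
    ∃ σ : Equiv.Perm δ, x = y ∘ σ := by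
  classical
  have hcard (e : E) : Nonempty ({s // x s = e} ≃ {s // y s = e}) := by
    refine Fintype.card_eq.1 ?_
    simpa [Finsupp.single_apply, Fintype.card_subtype] using DFunLike.congr_fun h e
  exact ⟨.ofFiberEquiv fun e => (hcard e).some,
    funext fun s => (Equiv.ofFiberEquiv_map _ s).symm⟩

lemma factorsThrough_sum_single_of_symmetric {τ : (δ → E) → k}
    (hτ : ∀ (σ : Equiv.Perm δ) x, τ (x ∘ σ) = τ x) :
    τ.FactorsThrough fun x => ∑ s, Finsupp.single (x s) (1 : ℕ) := by
  intro x y hxy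
  obtain ⟨σ, rfl⟩ := exists_perm_of_sum_single_eq x y hxy
  exact hτ σ y

/- A functional killing all these products has a generating polynomial that vanishes on `S`, hence
is zero; pairing its coefficients with `τ` gives the value of the functional at `τ`. -/
theorem mem_span_prod_of_symmetric [Field k] [Finite E] {S : Set (E → k)}
    (hS : ∀ P : MvPolynomial E k, (∀ w ∈ S, MvPolynomial.eval w P = 0) → P = 0)
    {τ : (δ → E) → k} (hτ : ∀ (σ : Equiv.Perm δ) x, τ (x ∘ σ) = τ x) :
    τ ∈ Submodule.span k ((fun w x => ∏ s, w (x s)) '' S) := by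
  classical
  have := Fintype.ofFinite E
  by_contra hmem
  obtain ⟨φ, hφτ, hφ⟩ := Submodule.exists_le_ker_of_notMem hmem
  let c (x : δ → E) : k := φ fun y => if x = y then 1 else 0
  have hφ_eq (τ' : (δ → E) → k) : φ τ' = ∑ x, c x * τ' x := by
    simp only [φ.pi_apply_eq_sum_univ τ', smul_eq_mul, mul_comm, c]
  let P : MvPolynomial E k := ∑ x, c x • ∏ s, MvPolynomial.X (x s)
  have hP_eval (w : E → k) : MvPolynomial.eval w P = φ fun x => ∏ s, w (x s) := by
    simp [P, hφ_eq, MvPolynomial.smul_eval]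
  have hP : P = 0 := hS P fun w hw =>
    (hP_eval w).trans (hφ (Submodule.subset_span ⟨w, hw, rfl⟩))
  obtain ⟨t, ht⟩ : ∃ t : (E →₀ ℕ) → k, ∀ x, t (∑ s, Finsupp.single (x s) 1) = τ x :=
    ⟨_, (factorsThrough_sum_single_of_symmetric hτ).extend_apply 0⟩
  let θ : MvPolynomial E k →ₗ[k] k := (MvPolynomial.basisMonomials E k).constr k t
  have hθ (m : E →₀ ℕ) : θ (MvPolynomial.monomial m 1) = t m := by
    simpa using (MvPolynomial.basisMonomials E k).constr_basis k t m
  refine hφτ ?_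
  calc φ τ = θ P := by
        simp only [hφ_eq τ, P, map_sum, map_smul, ← ht, MvPolynomial.X,
          ← MvPolynomial.monomial_sum_one, hθ, smul_eq_mul]
    _ = 0 := by rw [hP, map_zero]

end SymmetricTensors

section SchurWeyl

/-- The representation of `Perm δ` permuting the factors of the tensor power `(k^ν)^{⊗δ}`, whose
elements are given by their coordinates in the basis indexed by `δ → ν`. -/
def tensorPerm (k δ ν : Type*) [CommSemiring k] :
    Representation k (Equiv.Perm δ) ((δ → ν) → k) where
  toFun σ := LinearMap.funLeft k k (· ∘ σ)
  map_one' := rfl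
  map_mul' _ _ := rfl

lemma tensorPerm_apply {k δ ν : Type*} [CommSemiring k] (σ : Equiv.Perm δ) (v : (δ → ν) → k)
    (i : δ → ν) : tensorPerm k δ ν σ v i = v (i ∘ σ) := rfl

/-- The tensor power `M^{⊗δ}` of a matrix, in the basis of pure tensors: its rows and columns are
indexed by families of `δ` row and column indices of `M`. -/
def tensorPow (δ : Type*) {m n R : Type*} [Fintype δ] [CommSemiring R] (M : Matrix m n R) :
    Matrix (δ → m) (δ → n) R :=
  .of fun i j => ∏ s, M (i s) (j s)

section

variable {δ l m n R : Type*} [Fintype δ] [CommSemiring R]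

lemma tensorPow_mul [DecidableEq δ] [Fintype m] (M : Matrix l m R) (N : Matrix m n R) :
    tensorPow δ (M * N) = tensorPow δ M * tensorPow δ N := by
  ext i j
  simp only [tensorPow, Matrix.of_apply, Matrix.mul_apply, Finset.prod_univ_sum,
    Fintype.piFinset_univ, Finset.prod_mul_distrib]

lemma tensorPow_one [DecidableEq m] : tensorPow δ (1 : Matrix m m R) = 1 := by
  classical
  ext i j
  simp [tensorPow, Matrix.one_apply, Fintype.prod_ite_zero, funext_iff]

lemma tensorPow_map {R' : Type*} [CommSemiring R'] (f : R →+* R') (M : Matrix m n R) :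
    (tensorPow δ M).map f = tensorPow δ (M.map f) := by
  ext i j
  simp [tensorPow]

end

variable {k δ ν : Type*} [Field k] [Fintype δ] [Fintype ν] [DecidableEq ν]

theorem mem_span_tensorPow_of_symmetric [Infinite k] {M : Matrix (δ → ν) (δ → ν) k}
    (hM : ∀ (σ : Equiv.Perm δ) i j, M (i ∘ σ) (j ∘ σ) = M i j) :
    M ∈ Submodule.span k (Set.range fun g : GL ν k => tensorPow δ g.1) := by
  let Λ : ((δ → ν × ν) → k) →ₗ[k] Matrix (δ → ν) (δ → ν) k :=
    { toFun := fun τ => .of fun i j => τ fun s => (i s, j s)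
      map_add' := fun _ _ => rfl
      map_smul' := fun _ _ => rfl }
  have hmem : M ∈ Submodule.map Λ _ := Submodule.mem_map_of_mem <|
    mem_span_prod_of_symmetric (S := Set.range fun (g : GL ν k) (p : ν × ν) => g.1 p.1 p.2)
      (fun P hP => MvPolynomial.eq_of_eval_eq_on_gl fun g => by
        rw [map_zero]; exact hP _ ⟨g, rfl⟩)
      (τ := fun x => M (Prod.fst ∘ x) (Prod.snd ∘ x)) fun σ x => hM σ (Prod.fst ∘ x) (Prod.snd ∘ x)
  rwa [Submodule.map_span, ← Set.range_comp, ← Set.range_comp] at hmem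

lemma toMatrix'_comp_perm_of_commute [DecidableEq δ] {f : Module.End k ((δ → ν) → k)}
    (hf : ∀ σ, Commute f (tensorPerm k δ ν σ)) (σ : Equiv.Perm δ) (i j : δ → ν) :
    LinearMap.toMatrix' f (i ∘ σ) (j ∘ σ) = LinearMap.toMatrix' f i j := by
  have hj : tensorPerm k δ ν σ (Pi.single (j ∘ σ) 1) = Pi.single j 1 := by
    ext i'
    simp [tensorPerm_apply, Pi.single_apply, σ.surjective.injective_comp_right.eq_iff]
  rw [LinearMap.toMatrix'_apply, LinearMap.toMatrix'_apply, ← hj]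
  exact (congrFun (LinearMap.congr_fun (hf σ) _) i).symm

theorem exists_eq_sum_perm_of_commute_tensorPow [CharZero k] [DecidableEq δ]
    {T : Matrix (δ → ν) (δ → ν) k} (hT : ∀ g : GL ν k, Commute T (tensorPow δ g.1)) :
    ∃ c : Equiv.Perm δ → k, ∀ i j, T i j = ∑ σ, c σ * if i ∘ σ = j then 1 else 0 := by
  have hspan : Submodule.span k (Set.range fun g : GL ν k => tensorPow δ g.1) ≤
      (Subalgebra.centralizer k {T}).toSubmodule := by
    refine Submodule.span_le.2 ?_
    rintro _ ⟨g, rfl⟩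
    exact (Subalgebra.mem_centralizer_iff k).2 fun _ hT' => hT' ▸ (hT g).eq
  have hcomm (f : Module.End k ((δ → ν) → k)) (hf : ∀ σ, Commute f (tensorPerm k δ ν σ)) :
      Commute (Matrix.toLin' T) f := by
    have hTf := hspan (mem_span_tensorPow_of_symmetric (toMatrix'_comp_perm_of_commute hf))
    rw [Subalgebra.mem_toSubmodule, Subalgebra.mem_centralizer_iff] at hTf
    simpa only [Matrix.toLin'_mul, Matrix.toLin'_toMatrix', commute_iff_eq,
      Module.End.mul_eq_comp] using
      congrArg Matrix.toLin' (hTf T rfl)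
  obtain ⟨r, hr⟩ := mem_range_asAlgebraHom_of_commute (tensorPerm k δ ν) _ hcomm
  refine ⟨fun σ => r.coeff σ, fun i j => ?_⟩
  have hTij : T i j = Matrix.toLin' T (Pi.single j 1) i := by simp
  rw [hTij, ← hr, Representation.asAlgebraHom_def, MonoidAlgebra.lift_apply,
    Finsupp.sum_fintype _ _ (by simp)]
  simp [tensorPerm_apply, Pi.single_apply]

end SchurWeyl

section MixedTensors

open scoped Matrix

variable {k ν : Type*} [Fintype ν] [DecidableEq ν]

/-- The space of mixed tensors `Hom((k^ν)^{⊗ε}, (k^ν)^{⊗δ})`, as a representation of `GL ν k`. -/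
def tensorConj (k δ ε ν : Type*) [Fintype δ] [Fintype ε] [DecidableEq δ] [DecidableEq ε]
    [Fintype ν] [DecidableEq ν] [CommRing k] :
    Representation k (GL ν k) (Matrix (δ → ν) (ε → ν) k) where
  toFun g :=
    { toFun := fun M => tensorPow δ g.1 * M * tensorPow ε g⁻¹.1
      map_add' := fun M N => by rw [Matrix.mul_add, Matrix.add_mul]
      map_smul' := fun c M => by simp }
  map_one' := by ext1 M; simp [tensorPow_one]
  map_mul' g h := by ext1 M; simp [tensorPow_mul, Matrix.mul_assoc]

lemma tensorConj_apply {δ ε : Type*} [Fintype δ] [Fintype ε] [DecidableEq δ] [DecidableEq ε]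
    [CommRing k] (g : GL ν k) (M : Matrix (δ → ν) (ε → ν) k) :
    tensorConj k δ ε ν g M = tensorPow δ g.1 * M * tensorPow ε g⁻¹.1 := rfl

lemma exists_trace_transpose_mul_tensorConj [CommRing k] (g : GL ν k) :
    ∃ g' : GL ν k, ∀ (d e : ℕ) (M N : Matrix (Fin d → ν) (Fin e → ν) k),
      (Mᵀ * tensorConj k (Fin d) (Fin e) ν g N).trace =
        ((tensorConj k (Fin d) (Fin e) ν g' M)ᵀ * N).trace := by
  refine ⟨⟨g.1ᵀ, g⁻¹.1ᵀ, ?_, ?_⟩, fun d e M N => ?_⟩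
  · rw [← Matrix.transpose_mul, Units.inv_mul, Matrix.transpose_one]
  · rw [← Matrix.transpose_mul, Units.mul_inv, Matrix.transpose_one]
  · calc (Mᵀ * (tensorPow (Fin d) g.1 * N * tensorPow (Fin e) g⁻¹.1)).trace
        = (tensorPow (Fin e) g⁻¹.1 * (Mᵀ * tensorPow (Fin d) g.1) * N).trace := by
          rw [← Matrix.mul_assoc, Matrix.trace_mul_comm]
          simp only [Matrix.mul_assoc]
      _ = (((tensorPow (Fin d) g.1)ᵀ * M * (tensorPow (Fin e) g⁻¹.1)ᵀ)ᵀ * N).trace := by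
          simp only [Matrix.transpose_mul, Matrix.transpose_transpose]

lemma eq_zero_of_sum_trace_transpose_mul_self [CommRing k] [LinearOrder k]
    [IsStrictOrderedRing k] {J : Type*} [Fintype J] {m n : J → Type*} [∀ j, Fintype (m j)]
    [∀ j, Fintype (n j)] {v : ∀ j, Matrix (m j) (n j) k} (hv : ∑ j, ((v j)ᵀ * v j).trace = 0) :
    v = 0 := by
  have hnonneg (j) (b : n j) : 0 ≤ ∑ a, v j a b * v j a b :=
    Finset.sum_nonneg fun a _ => mul_self_nonneg _
  have htrace := (Fintype.sum_eq_zero_iff_of_nonneg fun j =>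
    Finset.sum_nonneg fun b _ => hnonneg j b).1 hv
  ext j a b
  have hcol := congrFun
    ((Fintype.sum_eq_zero_iff_of_nonneg (hnonneg j)).1 (congrFun htrace j)) b
  exact mul_self_eq_zero.1 <|
    congrFun ((Fintype.sum_eq_zero_iff_of_nonneg fun a => mul_self_nonneg (v j a b)).1 hcol) a

theorem exists_tensorConj_invariant_map_eq [Field k] [LinearOrder k] [IsStrictOrderedRing k]
    {J W : Type*} [Finite J] [AddCommGroup W] [Module k W] {d e : J → ℕ}
    (φ : (∀ m, Matrix (Fin (d m) → ν) (Fin (e m) → ν) k) →ₗ[k] W)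
    (u : ∀ m, Matrix (Fin (d m) → ν) (Fin (e m) → ν) k)
    (hφ : ∀ g : GL ν k, φ (fun m => tensorConj k _ _ ν g (u m)) = φ u) :
    ∃ v, (∀ m g, tensorConj k _ _ ν g (v m) = v m) ∧ φ v = φ u := by
  have := Fintype.ofFinite J
  let ρ : Representation k (GL ν k) (∀ m, Matrix (Fin (d m) → ν) (Fin (e m) → ν) k) :=
    { toFun := fun g => LinearMap.piMap fun m => tensorConj k _ _ ν g
      map_one' := by ext1 v; ext1 m; simp
      map_mul' := fun g h => by ext1 v; ext1 m; simp }
  let B : LinearMap.BilinForm k (∀ m, Matrix (Fin (d m) → ν) (Fin (e m) → ν) k) :=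
    LinearMap.mk₂ k (fun v w => ∑ m, ((v m)ᵀ * w m).trace)
      (by simp [Matrix.add_mul, Finset.sum_add_distrib]) (by simp [Finset.mul_sum])
      (by simp [Matrix.mul_add, Finset.sum_add_distrib]) (by simp [Finset.mul_sum])
  have hB_comm (v w) : B v w = B w v :=
    Finset.sum_congr rfl fun m _ => by
      rw [← Matrix.trace_transpose, Matrix.transpose_mul, Matrix.transpose_transpose]
  obtain ⟨v, hv, hφv⟩ := exists_invariant_map_eq ρ B (fun v w h => (hB_comm w v).trans h)
    (fun _ => eq_zero_of_sum_trace_transpose_mul_self)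
    (fun g => (exists_trace_transpose_mul_tensorConj g).imp fun g' hg' v w =>
      Finset.sum_congr rfl fun m _ => hg' _ _ _ _) φ u hφ
  exact ⟨v, fun m g => congrFun (hv g) m, hφv⟩

lemma eq_zero_of_tensorConj_invariant [Field k] [CharZero k] {d e : ℕ} (hde : d ≠ e)
    {M : Matrix (Fin d → ν) (Fin e → ν) k}
    (hM : ∀ g, tensorConj k (Fin d) (Fin e) ν g M = M) : M = 0 := by
  have hscalar (δ : ℕ) (c : k) :
      tensorPow (Fin δ) (c • (1 : Matrix ν ν k)) = c ^ δ • 1 := by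
    rw [← tensorPow_one]
    ext i j
    simp [tensorPow, Finset.prod_mul_distrib]
  let g : GL ν k := ⟨(2 : k) • 1, (2⁻¹ : k) • 1, by simp [smul_smul], by simp [smul_smul]⟩
  have hgM : ((2 : k) ^ d * 2⁻¹ ^ e) • M = M := by
    conv_rhs => rw [← hM g, tensorConj_apply]
    simp only [g, Units.inv_mk, hscalar, Matrix.smul_mul, Matrix.mul_smul, Matrix.one_mul,
      Matrix.mul_one, smul_smul, mul_comm]
  have hpow : (2 : k) ^ d * 2⁻¹ ^ e - 1 ≠ 0 := by
    rw [inv_pow, ← div_eq_mul_inv, sub_ne_zero, Ne, div_eq_one_iff_eq (pow_ne_zero e two_ne_zero)]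
    exact_mod_cast fun h => hde (Nat.pow_right_injective le_rfl h)
  refine (smul_eq_zero.1 ?_).resolve_left hpow
  rw [sub_smul, one_smul, hgM, sub_self]

end MixedTensors

section TensorEval

variable {k R ν ι₁ ι₂ d e : Type*} [Fintype d] [Fintype e] [DecidableEq d] [DecidableEq e]
  [Fintype ν] [Field k] [CommRing R] [Algebra k R]

/-- The contraction of a mixed tensor with rows `w s` of `A` and columns `u s` of `B`. On matrix
units it is a monomial in the entries of `A` and `B`. -/
def tensorEval (k : Type*) [Field k] [Algebra k R] (A : Matrix ι₁ ν R) (B : Matrix ν ι₂ R)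
    (w : d → ι₁) (u : e → ι₂) : Matrix (d → ν) (e → ν) k →ₗ[k] R where
  toFun M := (tensorPow d A * M.map (algebraMap k R) * tensorPow e B) w u
  map_add' M N := by simp [Matrix.map_add, Matrix.mul_add, Matrix.add_mul]
  map_smul' c M := by
    have hc : (c • M).map (algebraMap k R) = c • M.map (algebraMap k R) := by
      ext
      simp [Algebra.smul_def]
    simp [hc]

variable (A : Matrix ι₁ ν R) (B : Matrix ν ι₂ R) (w : d → ι₁) (u : e → ι₂)

lemma tensorEval_apply (M : Matrix (d → ν) (e → ν) k) :
    tensorEval k A B w u M = (tensorPow d A * M.map (algebraMap k R) * tensorPow e B) w u := rfl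

lemma tensorEval_eq_sum (M : Matrix (d → ν) (e → ν) k) :
    tensorEval k A B w u M =
      ∑ i, ∑ j, M i j • ((∏ s, A (w s) (i s)) * ∏ s, B (j s) (u s)) := by
  rw [tensorEval_apply, Matrix.mul_assoc, Matrix.mul_apply]
  refine Finset.sum_congr rfl fun i _ => ?_
  rw [Matrix.mul_apply, Finset.mul_sum]
  refine Finset.sum_congr rfl fun j _ => ?_
  rw [Matrix.map_apply, Algebra.smul_def, mul_left_comm]
  rfl

lemma tensorEval_single [DecidableEq ν] (i : d → ν) (j : e → ν) :
    tensorEval k A B w u (Matrix.single i j 1) = (∏ s, A (w s) (i s)) * ∏ s, B (j s) (u s) := by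
  rw [tensorEval_eq_sum, Fintype.sum_eq_single i, Fintype.sum_eq_single j]
  · rw [Matrix.single_apply_same, one_smul]
  · intro j' hj'
    simp [hj'.symm]
  · intro i' hi'
    simp [hi'.symm]

lemma map_tensorEval {R' : Type*} [CommRing R'] [Algebra k R'] (φ : R →ₐ[k] R')
    (M : Matrix (d → ν) (e → ν) k) :
    φ (tensorEval k A B w u M) = tensorEval k (A.map φ) (B.map φ) w u M := by
  simp [tensorEval_eq_sum]

lemma tensorEval_tensorConj [DecidableEq ν] (g : GL ν k) (M : Matrix (d → ν) (e → ν) k) :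
    tensorEval k A B w u (tensorConj k d e ν g M) =
      tensorEval k (A * g.1.map (algebraMap k R)) (g⁻¹.1.map (algebraMap k R) * B) w u M := by
  simp only [tensorEval_apply, tensorConj_apply, Matrix.map_mul, tensorPow_mul, tensorPow_map,
    Matrix.mul_assoc]

lemma commute_tensorPow_of_tensorConj_eq [DecidableEq ν] {g : GL ν k}
    {M : Matrix (d → ν) (d → ν) k} (hM : tensorConj k d d ν g M = M) :
    Commute M (tensorPow d g.1) := by
  rw [tensorConj_apply] at hM
  calc M * tensorPow d g.1
      = tensorPow d g.1 * M * (tensorPow d g⁻¹.1 * tensorPow d g.1) := by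
        rw [← Matrix.mul_assoc, hM]
    _ = tensorPow d g.1 * M := by
        rw [← tensorPow_mul, Units.inv_mul, tensorPow_one, Matrix.mul_one]

theorem tensorEval_mem_of_tensorConj_invariant [DecidableEq ν] [CharZero k] {S : Subalgebra k R}
    (hS : ∀ i j, (A * B) i j ∈ S) {d e : ℕ} (w : Fin d → ι₁) (u : Fin e → ι₂)
    {M : Matrix (Fin d → ν) (Fin e → ν) k} (hM : ∀ g, tensorConj k (Fin d) (Fin e) ν g M = M) :
    tensorEval k A B w u M ∈ S := by
  rcases ne_or_eq d e with hde | rfl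
  · rw [eq_zero_of_tensorConj_invariant hde hM, map_zero]
    exact S.zero_mem
  obtain ⟨c, hc⟩ := exists_eq_sum_perm_of_commute_tensorPow fun g =>
    commute_tensorPow_of_tensorConj_eq (hM g)
  have hperm (i : Fin d → ν) (σ : Equiv.Perm (Fin d)) :
      ∏ s, B (i (σ s)) (u s) = ∏ s, B (i s) (u (σ⁻¹ s)) := by
    rw [← Equiv.prod_comp σ fun s => B (i s) (u (σ⁻¹ s))]
    simp
  have heval : tensorEval k A B w u M =
      ∑ σ, c σ • ∏ s, (A * B) (w s) (u (σ⁻¹ s)) := by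
    simp only [tensorEval_eq_sum, hc, Finset.sum_smul, mul_ite, mul_one, mul_zero, ite_smul,
      zero_smul]
    calc _ = ∑ i : Fin d → ν, ∑ σ : Equiv.Perm (Fin d),
          c σ • ((∏ s, A (w s) (i s)) * ∏ s, B (i s) (u (σ⁻¹ s))) := by
          refine Finset.sum_congr rfl fun i _ => ?_
          rw [Finset.sum_comm]
          simp [hperm]
      _ = ∑ σ, c σ • ∏ s, (A * B) (w s) (u (σ⁻¹ s)) := by
          rw [Finset.sum_comm]
          simp [Matrix.mul_apply, Finset.prod_univ_sum, Finset.prod_mul_distrib, Finset.smul_sum]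
  rw [heval]
  exact S.sum_mem fun σ _ => S.smul_mem (S.prod_mem fun s _ => hS _ _) _

end TensorEval

section FirstFundamentalTheorem

variable {K ν ι₁ ι₂ σ : Type*} [Field K] [Fintype ν]

theorem exists_eq_sum_mul_tensorEval {k R : Type*} [Field k] [CommRing R] [Algebra k R]
    [Algebra K R] {A : Matrix ι₁ ν R} {B : Matrix ν ι₂ R} {C : σ → R} {f : R}
    (hf : f ∈ Algebra.adjoin K
      (Set.range (Function.uncurry A) ∪ Set.range (Function.uncurry B) ∪ Set.range C)) :
    ∃ (n : ℕ) (d e : Fin n → ℕ) (c : Fin n → Algebra.adjoin K (Set.range C))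
      (w : ∀ m, Fin (d m) → ι₁) (u : ∀ m, Fin (e m) → ι₂)
      (M : ∀ m, Matrix (Fin (d m) → ν) (Fin (e m) → ν) k),
      f = ∑ m, (c m : R) * tensorEval k A B (w m) (u m) (M m) := by
  classical
  set S := Algebra.adjoin K (Set.range C)
  let X : Set R := {x | ∃ (d e : ℕ) (c : S) (w : Fin d → ι₁) (i : Fin d → ν) (j : Fin e → ν)
    (u : Fin e → ι₂), x = (c : R) * ((∏ s, A (w s) (i s)) * ∏ s, B (j s) (u s))}
  have hX : f ∈ Submodule.span K X := by
    rw [← Subalgebra.mem_toSubmodule, Algebra.adjoin_eq_span] at hf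
    refine Submodule.span_mono (fun x hx => ?_) hf
    induction hx using Submonoid.closure_induction_left with
    | one => exact ⟨0, 0, 1, Fin.elim0, Fin.elim0, Fin.elim0, Fin.elim0, by simp⟩
    | mul_left x hx y hy ih =>
      obtain ⟨d, e, c, w, i, j, u, rfl⟩ := ih
      rcases hx with (⟨⟨a, b⟩, rfl⟩ | ⟨⟨a, b⟩, rfl⟩) | ⟨s, rfl⟩
      · refine ⟨d + 1, e, c, Fin.cons a w, Fin.cons b i, j, u, ?_⟩
        simp only [Function.uncurry, Fin.prod_univ_succ, Fin.cons_zero, Fin.cons_succ]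
        ring
      · refine ⟨d, e + 1, c, w, i, Fin.cons a j, Fin.cons b u, ?_⟩
        simp only [Function.uncurry, Fin.prod_univ_succ, Fin.cons_zero, Fin.cons_succ]
        ring
      · refine ⟨d, e, ⟨C s, Algebra.subset_adjoin ⟨s, rfl⟩⟩ * c, w, i, j, u, ?_⟩
        simp only [MulMemClass.coe_mul, mul_assoc]
  obtain ⟨n, a, x, rfl⟩ := Submodule.mem_span_set'.1 hX
  choose d e c w i j u hx using fun m => (x m).2
  refine ⟨n, d, e, fun m => a m • c m, w, u, fun m => Matrix.single (i m) (j m) 1, ?_⟩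
  refine Finset.sum_congr rfl fun m _ => ?_
  rw [hx m, tensorEval_single, Subalgebra.coe_smul, smul_mul_assoc]

lemma tensorEval_tensorConj_eval [DecidableEq ν] {k Z d e : Type*} [Fintype d] [Fintype e]
    [DecidableEq d] [DecidableEq e] [Field k] [Algebra k K] {A : Matrix ι₁ ν (Z → K)}
    {B : Matrix ν ι₂ (Z → K)} {g : GL ν k} {z z' : Z}
    (hA : A.map (· z') = A.map (· z) * g.1.map (algebraMap k K))
    (hB : B.map (· z') = g⁻¹.1.map (algebraMap k K) * B.map (· z))
    (w : d → ι₁) (u : e → ι₂) (M : Matrix (d → ν) (e → ν) k) :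
    tensorEval k A B w u (tensorConj k d e ν g M) z = tensorEval k A B w u M z' := by
  have heval (y : Z) (N : Matrix (d → ν) (e → ν) k) :
      tensorEval k A B w u N y = tensorEval k (A.map (· y)) (B.map (· y)) w u N :=
    map_tensorEval A B w u (Pi.evalAlgHom k (fun _ => K) y) N
  rw [heval, heval, tensorEval_tensorConj, hA, hB]

lemma eval_eq_eval_of_mem_adjoin {Z : Type*} {s : Set (Z → K)} {z z' : Z}
    (hs : ∀ a ∈ s, a z = a z') {f : Z → K} (hf : f ∈ Algebra.adjoin K s) : f z = f z' :=
  AlgHom.adjoin_le_equalizer (Pi.evalAlgHom K (fun _ => K) z) (Pi.evalAlgHom K (fun _ => K) z')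
    hs hf

/- Averaging the tensors in a presentation of `f` over `GL ν ℚ` does not change `f`, and invariant
tensors contract to polynomials in the entries of `A * B`. -/
theorem mem_adjoin_mul_of_GL_invariant [DecidableEq ν] [CharZero K] {Z : Type*}
    {A : Matrix ι₁ ν (Z → K)} {B : Matrix ν ι₂ (Z → K)} {C : σ → Z → K} {f : Z → K}
    (hf : f ∈ Algebra.adjoin K
      (Set.range (Function.uncurry A) ∪ Set.range (Function.uncurry B) ∪ Set.range C))
    (hinv : ∀ (g : GL ν ℚ) (z : Z), ∃ z' : Z,
      A.map (· z') = A.map (· z) * g.1.map (algebraMap ℚ K) ∧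
      B.map (· z') = g⁻¹.1.map (algebraMap ℚ K) * B.map (· z) ∧
      (∀ s, C s z = C s z') ∧ f z = f z') :
    f ∈ Algebra.adjoin K (Set.range (Function.uncurry (A * B)) ∪ Set.range C) := by
  obtain ⟨n, d, e, c, w, u, M, hfM⟩ := exists_eq_sum_mul_tensorEval (k := ℚ) hf
  set T := Algebra.adjoin K (Set.range (Function.uncurry (A * B)) ∪ Set.range C)
  let φ : (∀ m, Matrix (Fin (d m) → ν) (Fin (e m) → ν) ℚ) →ₗ[ℚ] (Z → K) :=
    ∑ m, LinearMap.mulLeft ℚ (c m : Z → K) ∘ₗ tensorEval ℚ A B (w m) (u m) ∘ₗ LinearMap.proj m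
  have hφ_apply (v) : φ v = ∑ m, (c m : Z → K) * tensorEval ℚ A B (w m) (u m) (v m) :=
    LinearMap.sum_apply _ _ _
  have hφ (g : GL ν ℚ) : φ (fun m => tensorConj ℚ _ _ ν g (M m)) = φ M := by
    ext z
    obtain ⟨z', hA, hB, hC, hfz⟩ := hinv g z
    have hc (m) : (c m : Z → K) z = (c m : Z → K) z' :=
      eval_eq_eval_of_mem_adjoin (Set.forall_mem_range.2 hC) (c m).2
    calc φ (fun m => tensorConj ℚ _ _ ν g (M m)) z = φ M z' := by
          simp only [hφ_apply, Finset.sum_apply, Pi.mul_apply, hc,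
            tensorEval_tensorConj_eval hA hB]
      _ = φ M z := by rw [hφ_apply, ← hfM, hfz]
  obtain ⟨v, hv, hφv⟩ := exists_tensorConj_invariant_map_eq φ M hφ
  rw [hfM, ← hφ_apply, ← hφv, hφ_apply]
  have hAB (i j) : (A * B) i j ∈ T.restrictScalars ℚ :=
    (Subalgebra.mem_restrictScalars ℚ).2 <|
      Algebra.subset_adjoin (Or.inl (Set.mem_range_self (i, j)))
  have hcT (m) : (c m : Z → K) ∈ T := Algebra.adjoin_mono Set.subset_union_right (c m).2
  have hvT (m) : tensorEval ℚ A B (w m) (u m) (v m) ∈ T.restrictScalars ℚ :=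
    tensorEval_mem_of_tensorConj_invariant A B hAB _ _ (hv m)
  exact T.sum_mem fun m _ => T.mul_mem (hcT m) (hvT m)

end FirstFundamentalTheorem

/-! ### Representations on the total space -/

namespace FinQuiver

variable {Q : FinQuiver} {K : Type} [Field K] {β γ : Q.I → ℕ}

section TotalSpace

open scoped Matrix

/-- The index set of a basis of the total space `⨁ i, K ^ γ i`. -/
abbrev Tot (γ : Q.I → ℕ) : Type := Σ i, Fin (γ i)

/-- The inclusion of the summand at `i` into the total space; its transpose is the projection. -/
def incl (K : Type) [Field K] (γ : Q.I → ℕ) (i : Q.I) : Matrix (Tot γ) (Fin (γ i)) K :=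
  (1 : Matrix (Tot γ) (Tot γ) K).submatrix id fun r => ⟨i, r⟩

lemma incl_transpose_mul_incl_self (i : Q.I) : (incl K γ i)ᵀ * incl K γ i = 1 := by
  ext r s
  simp [incl, Matrix.mul_apply, Matrix.one_apply]

lemma incl_transpose_mul_incl_of_ne {i j : Q.I} (hij : i ≠ j) :
    (incl K γ i)ᵀ * incl K γ j = 0 := by
  ext r s
  simp [incl, Matrix.mul_apply, Matrix.one_apply, hij]

lemma blockDiagonal'_mul_incl (L : ∀ i, Matrix (Fin (β i)) (Fin (γ i)) K) (i : Q.I) :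
    Matrix.blockDiagonal' L * incl K γ i = incl K β i * L i := by
  ext ⟨j, r⟩ s
  obtain rfl | hij := eq_or_ne j i
  · simp [incl, Matrix.mul_apply, Matrix.one_apply]
  · simp [incl, Matrix.mul_apply, Matrix.one_apply, Matrix.blockDiagonal'_apply_ne, hij]

lemma incl_transpose_mul_blockDiagonal' (L : ∀ i, Matrix (Fin (β i)) (Fin (γ i)) K) (i : Q.I) :
    (incl K β i)ᵀ * Matrix.blockDiagonal' L = L i * (incl K γ i)ᵀ := by
  rw [← Matrix.transpose_inj]
  simp only [Matrix.transpose_mul, Matrix.transpose_transpose, Matrix.blockDiagonal'_transpose]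
  exact blockDiagonal'_mul_incl (fun i => (L i)ᵀ) i

lemma incl_mul_mul_incl_transpose (i : Q.I) (M : Matrix (Fin (γ i)) (Fin (γ i)) K) :
    incl K γ i * M * (incl K γ i)ᵀ = Matrix.blockDiagonal' fun k => if h : i = k then
      M.submatrix (Fin.cast (congrArg γ h).symm) (Fin.cast (congrArg γ h).symm) else 0 := by
  rw [← sub_eq_zero]
  ext ⟨j, r⟩ ⟨k, s⟩
  obtain rfl | hij := eq_or_ne i j
  · obtain rfl | hik := eq_or_ne i k
    · simp [incl, Matrix.mul_apply, Matrix.one_apply]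
    · simp [incl, Matrix.mul_apply, Matrix.one_apply, Matrix.blockDiagonal'_apply_ne, hik]
  · simp [incl, Matrix.mul_apply, Matrix.one_apply, Matrix.blockDiagonal'_apply, hij, hij.symm]

/-- The arrows of a representation as endomorphisms of the total space. -/
def totalMap (x : Q.Rep K γ) (a : Q.DA) : Matrix (Tot γ) (Tot γ) K :=
  incl K γ (Q.dh a) * x a * (incl K γ (Q.dt a))ᵀ

lemma incl_transpose_mul_totalMap_mul_incl (x : Q.Rep K γ) (a : Q.DA) :
    (incl K γ (Q.dh a))ᵀ * totalMap x a * incl K γ (Q.dt a) = x a := by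
  simp only [totalMap, ← Matrix.mul_assoc, incl_transpose_mul_incl_self, Matrix.one_mul]
  rw [Matrix.mul_assoc, incl_transpose_mul_incl_self, Matrix.mul_one]

/-- The involution `a ↦ a*` on the arrows of the double quiver. -/
def star : Q.DA → Q.DA := Sum.swap

/-- The sign of the term `x_{a*} x_a` in the moment map. -/
def sgn (K : Type) [Field K] : Q.DA → K := Sum.elim (fun _ => -1) (fun _ => 1)

lemma dh_star (a : Q.DA) : Q.dh (star a) = Q.dt a := by cases a <;> rfl

lemma dt_star (a : Q.DA) : Q.dt (star a) = Q.dh a := by cases a <;> rfl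

theorem blockDiagonal'_moment (x : Q.Rep K γ) :
    Matrix.blockDiagonal' (Q.moment K γ x) =
      ∑ a : Q.DA, sgn K a • (totalMap x (star a) * totalMap x a) := by
  let D := Matrix.blockDiagonal'AddMonoidHom (fun i => Fin (γ i)) (fun i => Fin (γ i)) K
  have hmul {i j : Q.I} (M : Matrix (Fin (γ i)) (Fin (γ j)) K)
      (N : Matrix (Fin (γ j)) (Fin (γ i)) K) :
      incl K γ i * M * (incl K γ j)ᵀ * (incl K γ j * N * (incl K γ i)ᵀ) =
        D fun k => if h : i = k then
          (M * N).submatrix (Fin.cast (congrArg γ h).symm) (Fin.cast (congrArg γ h).symm) else 0 :=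
    calc _ = incl K γ i * (M * (((incl K γ j)ᵀ * incl K γ j) * N)) * (incl K γ i)ᵀ := by
          simp only [Matrix.mul_assoc]
      _ = _ := by
          rw [incl_transpose_mul_incl_self, Matrix.one_mul, incl_mul_mul_incl_transpose]
          rfl
  have hinl (a : Q.A) : totalMap x (Sum.inl a) * totalMap x (Sum.inr a) = _ :=
    hmul (x (Sum.inl a)) (x (Sum.inr a))
  have hinr (a : Q.A) : totalMap x (Sum.inr a) * totalMap x (Sum.inl a) = _ :=
    hmul (x (Sum.inr a)) (x (Sum.inl a))
  simp only [Fintype.sum_sum_type, sgn, Sum.elim_inl, Sum.elim_inr, star, Sum.swap_inl,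
    Sum.swap_inr, neg_smul, one_smul, Finset.sum_neg_distrib, hinl, hinr]
  rw [neg_add_eq_sub, ← map_sum, ← map_sum, ← map_sub]
  congr 1
  ext1 i
  simp only [moment, Pi.sub_apply, Finset.sum_apply]

end TotalSpace
end FinQuiver

namespace FinQuiver

variable {Q : FinQuiver} {K : Type} [Field K] {β γ δ : Q.I → ℕ}

section Transport

open Matrix (blockDiagonal')

/-- The representation `L x_a R` obtained by composing the arrows with linear maps at the two ends.
The action of `Gl` is the case `R = L⁻¹`. -/
def transport (L : ∀ i, Matrix (Fin (β i)) (Fin (γ i)) K)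
    (R : ∀ i, Matrix (Fin (γ i)) (Fin (β i)) K) (x : Q.Rep K γ) : Q.Rep K β :=
  fun a => L (Q.dh a) * x a * R (Q.dt a)

lemma transport_transport (L : ∀ i, Matrix (Fin (β i)) (Fin (γ i)) K)
    (R : ∀ i, Matrix (Fin (γ i)) (Fin (β i)) K) (L' : ∀ i, Matrix (Fin (δ i)) (Fin (β i)) K)
    (R' : ∀ i, Matrix (Fin (β i)) (Fin (δ i)) K) (x : Q.Rep K γ) :
    transport L' R' (transport L R x) =
      transport (fun i => L' i * L i) (fun i => R i * R' i) x := by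
  funext a
  simp only [transport, Matrix.mul_assoc]

lemma transport_one (x : Q.Rep K γ) : transport (fun _ => 1) (fun _ => 1) x = x := by
  funext a
  simp only [transport, Matrix.one_mul, Matrix.mul_one]

lemma totalMap_transport (L : ∀ i, Matrix (Fin (β i)) (Fin (γ i)) K)
    (R : ∀ i, Matrix (Fin (γ i)) (Fin (β i)) K) (x : Q.Rep K γ) (a : Q.DA) :
    totalMap (transport L R x) a = blockDiagonal' L * totalMap x a * blockDiagonal' R := by
  simp only [totalMap, transport, ← Matrix.mul_assoc, blockDiagonal'_mul_incl]
  simp only [Matrix.mul_assoc, incl_transpose_mul_blockDiagonal']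

lemma mem_momentFiber_iff {l : Q.I → K} {x : Q.Rep K γ} :
    x ∈ Q.MomentFiber K l γ ↔ ∑ a : Q.DA, sgn K a • (totalMap x (star a) * totalMap x a) =
      blockDiagonal' fun i => l i • (1 : Matrix (Fin (γ i)) (Fin (γ i)) K) := by
  rw [← blockDiagonal'_moment, Matrix.blockDiagonal'_inj, funext_iff]
  rfl

theorem transport_mem_momentFiber {l : Q.I → K} {x : Q.Rep K γ} (hx : x ∈ Q.MomentFiber K l γ)
    {L : ∀ i, Matrix (Fin (β i)) (Fin (γ i)) K} {R : ∀ i, Matrix (Fin (γ i)) (Fin (β i)) K}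
    (hLR : ∀ i, l i • (L i * R i) = l i • (1 : Matrix (Fin (β i)) (Fin (β i)) K))
    (hRL : ∀ a, totalMap x (star a) * blockDiagonal' (fun i => R i * L i) * totalMap x a =
      totalMap x (star a) * totalMap x a) :
    transport L R x ∈ Q.MomentFiber K l β := by
  rw [mem_momentFiber_iff] at hx ⊢
  calc ∑ a, sgn K a • (totalMap (transport L R x) (star a) * totalMap (transport L R x) a)
      = ∑ a, sgn K a • (blockDiagonal' L * (totalMap x (star a) *
          blockDiagonal' (fun i => R i * L i) * totalMap x a) * blockDiagonal' R) := by
        simp only [totalMap_transport, Matrix.blockDiagonal'_mul, Matrix.mul_assoc]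
    _ = blockDiagonal' L * (∑ a, sgn K a • (totalMap x (star a) * totalMap x a)) *
          blockDiagonal' R := by
        simp only [hRL, Matrix.mul_sum, Matrix.sum_mul, Matrix.mul_smul, Matrix.smul_mul]
    _ = blockDiagonal' fun i => l i • (1 : Matrix (Fin (β i)) (Fin (β i)) K) := by
        simp only [hx, ← Matrix.blockDiagonal'_mul, Matrix.mul_smul, Matrix.smul_mul,
          Matrix.mul_one, hLR]

lemma transport_mem_momentFiber_of_mul_eq_one {l : Q.I → K} {x : Q.Rep K γ}
    (hx : x ∈ Q.MomentFiber K l γ) {L : ∀ i, Matrix (Fin (β i)) (Fin (γ i)) K}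
    {R : ∀ i, Matrix (Fin (γ i)) (Fin (β i)) K}
    (hLR : ∀ i, l i • (L i * R i) = l i • (1 : Matrix (Fin (β i)) (Fin (β i)) K))
    (hRL : ∀ i, R i * L i = 1) : transport L R x ∈ Q.MomentFiber K l β := by
  have hone : blockDiagonal' (fun i => R i * L i) = 1 :=
    (congrArg blockDiagonal' (funext hRL)).trans Matrix.blockDiagonal'_one
  exact transport_mem_momentFiber hx hLR fun a => by rw [hone, Matrix.mul_one]

lemma glAct_eq_transport (g : Q.Gl K γ) (x : Q.Rep K γ) :
    Q.glAct K γ g x = transport (fun i => (g i).1) (fun i => (g i)⁻¹.1) x :=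
  rfl

lemma glAct_mem_momentFiber {l : Q.I → K} {x : Q.Rep K γ} (hx : x ∈ Q.MomentFiber K l γ)
    (g : Q.Gl K γ) : Q.glAct K γ g x ∈ Q.MomentFiber K l γ :=
  transport_mem_momentFiber_of_mul_eq_one (L := fun i => (g i).1) (R := fun i => (g i)⁻¹.1) hx
    (fun i => by rw [Units.mul_inv]) (fun i => Units.inv_mul (g i))

end Transport

section Contraction

open scoped Matrix
open Matrix (blockDiagonal')

variable {i0 : Q.I} {x : Q.Rep K γ}

/-- The projection of the total space along the summand at `i0` onto the other summands. -/
def awayProj (K : Type) [Field K] (γ : Q.I → ℕ) (i0 : Q.I) : Matrix (Tot γ) (Tot γ) K :=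
  blockDiagonal' fun i => if i = i0 then 0 else 1

lemma awayProj_add_incl_mul_transpose (i0 : Q.I) :
    awayProj K γ i0 + incl K γ i0 * (incl K γ i0)ᵀ = 1 := by
  have h := incl_mul_mul_incl_transpose i0 (1 : Matrix (Fin (γ i0)) (Fin (γ i0)) K)
  rw [Matrix.mul_one] at h
  rw [h, awayProj, ← Matrix.blockDiagonal'_add, ← Matrix.blockDiagonal'_one]
  congr 1
  ext1 k
  obtain rfl | hk := eq_or_ne k i0
  · simp
  · simp [hk, hk.symm]

lemma blockDiagonal'_mul_awayProj (L : ∀ i, Matrix (Fin (β i)) (Fin (γ i)) K) :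
    blockDiagonal' L * awayProj K γ i0 = awayProj K β i0 * blockDiagonal' L := by
  simp only [awayProj, ← Matrix.blockDiagonal'_mul]
  congr 1
  ext1 i
  split_ifs <;> simp

lemma blockDiagonal'_mul_awayProj_congr {L L' : ∀ i, Matrix (Fin (β i)) (Fin (γ i)) K}
    (h : ∀ i ≠ i0, L i = L' i) :
    blockDiagonal' L * awayProj K γ i0 = blockDiagonal' L' * awayProj K γ i0 := by
  simp only [awayProj, ← Matrix.blockDiagonal'_mul]
  congr 1
  ext1 i
  split_ifs with hi
  · simp
  · rw [h i hi]

/-- The part of `x_a` from the vertex `i0` to the other vertices. -/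
def fromVertex (i0 : Q.I) (x : Q.Rep K γ) (a : Q.DA) : Matrix (Tot γ) (Fin (γ i0)) K :=
  awayProj K γ i0 * totalMap x a * incl K γ i0

/-- The part of `x_a` from the other vertices to the vertex `i0`. -/
def toVertex (i0 : Q.I) (x : Q.Rep K γ) (a : Q.DA) : Matrix (Fin (γ i0)) (Tot γ) K :=
  (incl K γ i0)ᵀ * totalMap x a * awayProj K γ i0

/-- The part of `x_a` not touching the vertex `i0`. -/
def awayPart (i0 : Q.I) (x : Q.Rep K γ) (a : Q.DA) : Matrix (Tot γ) (Tot γ) K :=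
  awayProj K γ i0 * totalMap x a * awayProj K γ i0

lemma fromVertex_transport (L : ∀ i, Matrix (Fin (β i)) (Fin (γ i)) K)
    (R : ∀ i, Matrix (Fin (γ i)) (Fin (β i)) K) (x : Q.Rep K γ) (a : Q.DA) :
    fromVertex i0 (transport L R x) a = blockDiagonal' L * fromVertex i0 x a * R i0 := by
  simp only [fromVertex, totalMap_transport, ← Matrix.mul_assoc, blockDiagonal'_mul_awayProj]
  simp only [Matrix.mul_assoc, blockDiagonal'_mul_incl]

lemma toVertex_transport (L : ∀ i, Matrix (Fin (β i)) (Fin (γ i)) K)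
    (R : ∀ i, Matrix (Fin (γ i)) (Fin (β i)) K) (x : Q.Rep K γ) (a : Q.DA) :
    toVertex i0 (transport L R x) a = L i0 * toVertex i0 x a * blockDiagonal' R := by
  simp only [toVertex, totalMap_transport, ← Matrix.mul_assoc, incl_transpose_mul_blockDiagonal']
  simp only [Matrix.mul_assoc, blockDiagonal'_mul_awayProj]

lemma awayPart_transport (L : ∀ i, Matrix (Fin (β i)) (Fin (γ i)) K)
    (R : ∀ i, Matrix (Fin (γ i)) (Fin (β i)) K) (x : Q.Rep K γ) (a : Q.DA) :
    awayPart i0 (transport L R x) a = blockDiagonal' L * awayPart i0 x a * blockDiagonal' R := by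
  simp only [awayPart, totalMap_transport, ← Matrix.mul_assoc, blockDiagonal'_mul_awayProj]
  simp only [Matrix.mul_assoc, blockDiagonal'_mul_awayProj]

lemma blockDiagonal'_mul_fromVertex_congr {L L' : ∀ i, Matrix (Fin (β i)) (Fin (γ i)) K}
    (h : ∀ i ≠ i0, L i = L' i) (a : Q.DA) :
    blockDiagonal' L * fromVertex i0 x a = blockDiagonal' L' * fromVertex i0 x a := by
  simp only [fromVertex, ← Matrix.mul_assoc, blockDiagonal'_mul_awayProj_congr h]

lemma toVertex_mul_blockDiagonal'_congr {R R' : ∀ i, Matrix (Fin (γ i)) (Fin (β i)) K}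
    (h : ∀ i ≠ i0, R i = R' i) (b : Q.DA) :
    toVertex i0 x b * blockDiagonal' R = toVertex i0 x b * blockDiagonal' R' := by
  simp only [toVertex, Matrix.mul_assoc, ← blockDiagonal'_mul_awayProj,
    blockDiagonal'_mul_awayProj_congr h]

lemma blockDiagonal'_mul_awayPart_mul_congr {L L' : ∀ i, Matrix (Fin (β i)) (Fin (γ i)) K}
    {R R' : ∀ i, Matrix (Fin (γ i)) (Fin (β i)) K} (hL : ∀ i ≠ i0, L i = L' i)
    (hR : ∀ i ≠ i0, R i = R' i) (a : Q.DA) :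
    blockDiagonal' L * awayPart i0 x a * blockDiagonal' R =
      blockDiagonal' L' * awayPart i0 x a * blockDiagonal' R' := by
  simp only [awayPart, ← Matrix.mul_assoc, blockDiagonal'_mul_awayProj_congr hL]
  simp only [Matrix.mul_assoc, ← blockDiagonal'_mul_awayProj,
    blockDiagonal'_mul_awayProj_congr hR]

/-- Two representations with the same composites through `i0` and the same arrows away from `i0`.
By the first fundamental theorem invariants do not distinguish them. -/
def SameContraction (i0 : Q.I) (x y : Q.Rep K γ) : Prop :=
  (∀ a b, fromVertex i0 x a * toVertex i0 x b = fromVertex i0 y a * toVertex i0 y b) ∧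
    ∀ a, awayPart i0 x a = awayPart i0 y a

lemma SameContraction.symm {y : Q.Rep K γ} (h : SameContraction i0 x y) : SameContraction i0 y x :=
  ⟨fun a b => (h.1 a b).symm, fun a => (h.2 a).symm⟩

lemma SameContraction.trans {y z : Q.Rep K γ} (h : SameContraction i0 x y)
    (h' : SameContraction i0 y z) : SameContraction i0 x z :=
  ⟨fun a b => (h.1 a b).trans (h'.1 a b), fun a => (h.2 a).trans (h'.2 a)⟩

lemma fromVertex_mul_toVertex_transport {L : ∀ i, Matrix (Fin (β i)) (Fin (γ i)) K}
    {R : ∀ i, Matrix (Fin (γ i)) (Fin (β i)) K} {a b : Q.DA}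
    (h : fromVertex i0 x a * (R i0 * L i0) * toVertex i0 x b =
      fromVertex i0 x a * toVertex i0 x b) :
    fromVertex i0 (transport L R x) a * toVertex i0 (transport L R x) b =
      blockDiagonal' L * (fromVertex i0 x a * toVertex i0 x b) * blockDiagonal' R := by
  rw [← h, fromVertex_transport, toVertex_transport]
  simp only [Matrix.mul_assoc]

theorem sameContraction_transport {L L' : ∀ i, Matrix (Fin (β i)) (Fin (γ i)) K}
    {R R' : ∀ i, Matrix (Fin (γ i)) (Fin (β i)) K} (hL : ∀ i ≠ i0, L i = L' i)
    (hR : ∀ i ≠ i0, R i = R' i)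
    (h : ∀ a b, fromVertex i0 x a * (R i0 * L i0) * toVertex i0 x b =
      fromVertex i0 x a * toVertex i0 x b)
    (h' : ∀ a b, fromVertex i0 x a * (R' i0 * L' i0) * toVertex i0 x b =
      fromVertex i0 x a * toVertex i0 x b) :
    SameContraction i0 (transport L R x) (transport L' R' x) := by
  refine ⟨fun a b => ?_, fun a => ?_⟩
  · rw [fromVertex_mul_toVertex_transport (h a b), fromVertex_mul_toVertex_transport (h' a b),
      ← Matrix.mul_assoc, ← Matrix.mul_assoc, blockDiagonal'_mul_fromVertex_congr hL,
      Matrix.mul_assoc, Matrix.mul_assoc, toVertex_mul_blockDiagonal'_congr hR]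
    simp only [Matrix.mul_assoc]
  · rw [awayPart_transport, awayPart_transport, blockDiagonal'_mul_awayPart_mul_congr hL hR]

lemma SameContraction.transport {y : Q.Rep K γ} (h : SameContraction i0 x y)
    {L : ∀ i, Matrix (Fin (β i)) (Fin (γ i)) K} {R : ∀ i, Matrix (Fin (γ i)) (Fin (β i)) K}
    (hRL : R i0 * L i0 = 1) :
    SameContraction i0 (transport L R x) (transport L R y) := by
  refine ⟨fun a b => ?_, fun a => ?_⟩
  · rw [fromVertex_mul_toVertex_transport (by rw [hRL, Matrix.mul_one]), h.1,
      fromVertex_mul_toVertex_transport (by rw [hRL, Matrix.mul_one])]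
  · rw [awayPart_transport, awayPart_transport, h.2]

lemma totalMap_eq_add (hloop : ∀ a, Q.dt a = i0 → Q.dh a ≠ i0) (x : Q.Rep K γ) (a : Q.DA) :
    totalMap x a = awayPart i0 x a + fromVertex i0 x a * (incl K γ i0)ᵀ +
      incl K γ i0 * toVertex i0 x a := by
  have hzero : (incl K γ i0)ᵀ * totalMap x a * incl K γ i0 = 0 := by
    simp only [totalMap, ← Matrix.mul_assoc]
    by_cases ht : Q.dt a = i0
    · rw [incl_transpose_mul_incl_of_ne (hloop a ht).symm]
      simp only [Matrix.zero_mul]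
    · rw [Matrix.mul_assoc, incl_transpose_mul_incl_of_ne ht, Matrix.mul_zero]
  calc totalMap x a
      = (awayProj K γ i0 + incl K γ i0 * (incl K γ i0)ᵀ) * totalMap x a *
          (awayProj K γ i0 + incl K γ i0 * (incl K γ i0)ᵀ) := by
        rw [awayProj_add_incl_mul_transpose, Matrix.one_mul, Matrix.mul_one]
    _ = awayPart i0 x a + fromVertex i0 x a * (incl K γ i0)ᵀ + incl K γ i0 * toVertex i0 x a +
          incl K γ i0 * ((incl K γ i0)ᵀ * totalMap x a * incl K γ i0) * (incl K γ i0)ᵀ := by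
        simp only [awayPart, fromVertex, toVertex, Matrix.mul_add, Matrix.add_mul,
          Matrix.mul_assoc]
        abel
    _ = _ := by rw [hzero, Matrix.mul_zero, Matrix.zero_mul, add_zero]

end Contraction
end FinQuiver

/-! ### The simple composition factor -/

section Rank

open scoped Matrix

variable {K m ι : Type*} [Field K] [Fintype m] [Fintype ι]

theorem exists_mulVec_eq_zero_or_vecMul_eq_zero {A : Matrix m ι K} {B : Matrix ι m K}
    (hAB : A * B = 0) (hcard : Fintype.card ι < 2 * Fintype.card m) :
    ∃ v, v ≠ 0 ∧ (B *ᵥ v = 0 ∨ v ᵥ* A = 0) := by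
  by_contra! h
  have hA : A.rank = Fintype.card m := by
    refine LinearIndependent.rank_matrix (Matrix.vecMul_injective_iff.1 fun v w hvw => ?_)
    by_contra hne
    exact (h _ (sub_ne_zero.2 hne)).2 (by rw [Matrix.sub_vecMul, sub_eq_zero]; exact hvw)
  have hB : B.rank = Fintype.card m := by
    rw [← Matrix.rank_transpose]
    refine LinearIndependent.rank_matrix (Matrix.mulVec_injective_iff.1 fun v w hvw => ?_)
    by_contra hne
    exact (h _ (sub_ne_zero.2 hne)).1 (by rw [Matrix.mulVec_sub, sub_eq_zero]; exact hvw)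
  have := Matrix.rank_add_rank_le_card_of_mul_eq_zero hAB
  lia

end Rank

namespace FinQuiver

variable {Q : FinQuiver} {K : Type} [Field K] {γ : Q.I → ℕ} {i0 : Q.I}

section CompositionFactor

open scoped Matrix

lemma star_star (a : Q.DA) : star (star a) = a := Sum.swap_swap a

lemma sgn_ne_zero (a : Q.DA) : sgn K a ≠ 0 := by cases a <;> simp [sgn]

lemma incl_mul_transpose_mul_totalMap (x : Q.Rep K γ) (a : Q.DA) :
    incl K γ (Q.dh a) * (incl K γ (Q.dh a))ᵀ * totalMap x a = totalMap x a := by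
  simp only [totalMap, Matrix.mul_assoc]
  rw [← Matrix.mul_assoc (incl K γ (Q.dh a))ᵀ, incl_transpose_mul_incl_self, Matrix.one_mul]

lemma totalMap_mul_incl_mul_transpose (x : Q.Rep K γ) (a : Q.DA) :
    totalMap x a * (incl K γ (Q.dt a) * (incl K γ (Q.dt a))ᵀ) = totalMap x a := by
  simp only [totalMap, ← Matrix.mul_assoc]
  rw [Matrix.mul_assoc _ _ (incl K γ (Q.dt a)), incl_transpose_mul_incl_self, Matrix.mul_one]

lemma totalMap_mul_incl_of_ne (x : Q.Rep K γ) {a : Q.DA} (ha : Q.dt a ≠ i0) :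
    totalMap x a * incl K γ i0 = 0 := by
  rw [totalMap, Matrix.mul_assoc, incl_transpose_mul_incl_of_ne ha, Matrix.mul_zero]

lemma incl_transpose_mul_totalMap_of_ne (x : Q.Rep K γ) {a : Q.DA} (ha : Q.dh a ≠ i0) :
    (incl K γ i0)ᵀ * totalMap x a = 0 := by
  simp only [totalMap, ← Matrix.mul_assoc, incl_transpose_mul_incl_of_ne ha.symm, Matrix.zero_mul]

lemma sum_sgn_smul_incl_transpose_mul_totalMap {l : Q.I → K} {x : Q.Rep K γ}
    (hx : x ∈ Q.MomentFiber K l γ) (i : Q.I) :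
    ∑ a : {a : Q.DA // Q.dt a = i}, sgn K a.1 • ((incl K γ i)ᵀ * totalMap x (star a.1) *
      (totalMap x a.1 * incl K γ i)) = l i • 1 := by
  calc _ = ∑ a : Q.DA, sgn K a • ((incl K γ i)ᵀ * totalMap x (star a) *
          (totalMap x a * incl K γ i)) := by
        rw [← Finset.sum_subtype (Finset.univ.filter (Q.dt · = i)) (by simp) fun a =>
          sgn K a • ((incl K γ i)ᵀ * totalMap x (star a) * (totalMap x a * incl K γ i))]
        refine Finset.sum_filter_of_ne fun a _ => not_imp_comm.1 fun ha => ?_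
        rw [totalMap_mul_incl_of_ne x ha, Matrix.mul_zero, smul_zero]
    _ = (incl K γ i)ᵀ * (∑ a, sgn K a • (totalMap x (star a) * totalMap x a)) * incl K γ i := by
        simp only [Matrix.mul_sum, Matrix.sum_mul, Matrix.mul_smul, Matrix.smul_mul,
          Matrix.mul_assoc]
    _ = l i • 1 := by
        rw [mem_momentFiber_iff.1 hx, incl_transpose_mul_blockDiagonal', Matrix.smul_mul,
          Matrix.one_mul, Matrix.smul_mul, incl_transpose_mul_incl_self]

/-- The arrows out of `i0`, stacked into one matrix. -/
def outgoing (i0 : Q.I) (x : Q.Rep K γ) :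
    Matrix (Σ a : {a : Q.DA // Q.dt a = i0}, Fin (γ (Q.dh a.1))) (Fin (γ i0)) K :=
  Matrix.of fun p k => ((incl K γ (Q.dh p.1.1))ᵀ * (totalMap x p.1.1 * incl K γ i0)) p.2 k

/-- The arrows into `i0`, with the signs of the moment map, indexed by the opposite arrows and
stacked into one matrix. -/
def incoming (i0 : Q.I) (x : Q.Rep K γ) :
    Matrix (Fin (γ i0)) (Σ a : {a : Q.DA // Q.dt a = i0}, Fin (γ (Q.dh a.1))) K :=
  Matrix.of fun k p => (sgn K p.1.1 •
    ((incl K γ i0)ᵀ * totalMap x (star p.1.1) * incl K γ (Q.dh p.1.1))) k p.2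

theorem incoming_mul_outgoing {l : Q.I → K} {x : Q.Rep K γ} (hx : x ∈ Q.MomentFiber K l γ) :
    incoming i0 x * outgoing i0 x = l i0 • 1 := by
  have hmul (a : Q.DA) : sgn K a • ((incl K γ i0)ᵀ * totalMap x (star a) *
      (totalMap x a * incl K γ i0)) =
        (sgn K a • ((incl K γ i0)ᵀ * totalMap x (star a) * incl K γ (Q.dh a))) *
          ((incl K γ (Q.dh a))ᵀ * (totalMap x a * incl K γ i0)) := by
    nth_rw 1 [← incl_mul_transpose_mul_totalMap x a]
    simp only [Matrix.smul_mul, Matrix.mul_assoc]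
  rw [← sum_sgn_smul_incl_transpose_mul_totalMap hx i0]
  ext k k'
  rw [Matrix.sum_apply]
  refine (Fintype.sum_sigma _).trans (Finset.sum_congr rfl fun a _ => ?_)
  rw [hmul]
  rfl

lemma totalMap_mul_incl_mulVec_eq_zero {x : Q.Rep K γ} {v : Fin (γ i0) → K}
    (hv : outgoing i0 x *ᵥ v = 0) (a : Q.DA) : (totalMap x a * incl K γ i0) *ᵥ v = 0 := by
  by_cases ha : Q.dt a = i0
  · have hz : ((incl K γ (Q.dh a))ᵀ * (totalMap x a * incl K γ i0)) *ᵥ v = 0 :=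
      funext fun s => congrFun hv ⟨⟨a, ha⟩, s⟩
    rw [← incl_mul_transpose_mul_totalMap x a, Matrix.mul_assoc, Matrix.mul_assoc,
      ← Matrix.mulVec_mulVec, hz, Matrix.mulVec_zero]
  · rw [totalMap_mul_incl_of_ne x ha, Matrix.zero_mulVec]

lemma vecMul_incl_transpose_mul_totalMap_eq_zero {x : Q.Rep K γ} {v : Fin (γ i0) → K}
    (hv : v ᵥ* incoming i0 x = 0) (a : Q.DA) : v ᵥ* ((incl K γ i0)ᵀ * totalMap x a) = 0 := by
  by_cases ha : Q.dh a = i0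
  · have hz : v ᵥ* (sgn K (star a) • ((incl K γ i0)ᵀ * totalMap x (star (star a)) *
        incl K γ (Q.dh (star a)))) = 0 :=
      funext fun s => congrFun hv ⟨⟨star a, (dt_star a).trans ha⟩, s⟩
    have hX : (incl K γ i0)ᵀ * totalMap x a = (incl K γ i0)ᵀ * totalMap x (star (star a)) *
        incl K γ (Q.dh (star a)) * (incl K γ (Q.dh (star a)))ᵀ := by
      rw [star_star, dh_star, Matrix.mul_assoc, Matrix.mul_assoc,
        totalMap_mul_incl_mul_transpose]
    rw [Matrix.vecMul_smul, smul_eq_zero_iff_right (sgn_ne_zero _)] at hz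
    rw [hX, ← Matrix.vecMul_vecMul, hz, Matrix.zero_vecMul]
  · rw [incl_transpose_mul_totalMap_of_ne x ha, Matrix.vecMul_zero]

/- The maps out of and into `i0` factor zero through a space of dimension less than `2 * γ i0`, so
they cannot be respectively injective and surjective. -/
theorem exists_killed_vector {l : Q.I → K} {x : Q.Rep K γ} (hx : x ∈ Q.MomentFiber K l γ)
    (hl : l i0 = 0) (hdim : ∑ a : {a : Q.DA // Q.dt a = i0}, γ (Q.dh a.1) < 2 * γ i0) :
    ∃ v : Fin (γ i0) → K, v ≠ 0 ∧ ((∀ a, (totalMap x a * incl K γ i0) *ᵥ v = 0) ∨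
      ∀ a, v ᵥ* ((incl K γ i0)ᵀ * totalMap x a) = 0) := by
  have hzero : incoming i0 x * outgoing i0 x = 0 := by
    rw [incoming_mul_outgoing hx, hl, zero_smul]
  obtain ⟨v, hv, hout | hin⟩ :=
    exists_mulVec_eq_zero_or_vecMul_eq_zero hzero (by simpa using hdim)
  · exact ⟨v, hv, Or.inl (totalMap_mul_incl_mulVec_eq_zero hout)⟩
  · exact ⟨v, hv, Or.inr (vecMul_incl_transpose_mul_totalMap_eq_zero hin)⟩

lemma incl_transpose_mul_totalMap_mul (x : Q.Rep K γ) (a : Q.DA) :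
    (incl K γ (Q.dh a))ᵀ * totalMap x a = x a * (incl K γ (Q.dt a))ᵀ := by
  simp only [totalMap, ← Matrix.mul_assoc, incl_transpose_mul_incl_self, Matrix.one_mul]

lemma totalMap_mul_incl (x : Q.Rep K γ) (a : Q.DA) :
    totalMap x a * incl K γ (Q.dt a) = incl K γ (Q.dh a) * x a := by
  rw [totalMap, Matrix.mul_assoc, incl_transpose_mul_incl_self, Matrix.mul_one]

lemma hasSFactor_of_mulVec_eq_zero {x : Q.Rep K γ} (hloop : ∀ a, Q.dt a = i0 → Q.dh a ≠ i0)
    {v : Fin (γ i0) → K} (hv : v ≠ 0) (hx : ∀ a, (totalMap x a * incl K γ i0) *ᵥ v = 0) :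
    Q.HasSFactor K γ i0 x := by
  let w (i : Q.I) : Fin (γ i) → K := ((incl K γ i)ᵀ * incl K γ i0) *ᵥ v
  have hxw (a : Q.DA) : x a *ᵥ w (Q.dt a) = 0 := by
    rw [Matrix.mulVec_mulVec, ← Matrix.mul_assoc, ← incl_transpose_mul_totalMap_mul,
      Matrix.mul_assoc, ← Matrix.mulVec_mulVec, hx, Matrix.mulVec_zero]
  refine ⟨fun _ => ⊥, fun i => Submodule.span K {w i}, ?_, ?_, fun _ => bot_le, fun i => ?_,
    fun a hh ht => absurd hh (hloop a ht)⟩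
  · rintro a u rfl
    rw [Matrix.mulVec_zero]
    exact Submodule.zero_mem _
  · intro a u hu
    obtain ⟨c, rfl⟩ := Submodule.mem_span_singleton.1 hu
    rw [Matrix.mulVec_smul, hxw, smul_zero]
    exact Submodule.zero_mem _
  · obtain rfl | hi := eq_or_ne i i0
    · have hw : w i = v := by simp only [w, incl_transpose_mul_incl_self, Matrix.one_mulVec]
      beta_reduce
      rw [hw, finrank_span_singleton hv, finrank_bot, if_pos rfl]
    · have hw : w i = 0 := by simp only [w, incl_transpose_mul_incl_of_ne hi, Matrix.zero_mulVec]
      beta_reduce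
      rw [hw, Submodule.span_zero_singleton, finrank_bot, if_neg hi]

lemma hasSFactor_of_vecMul_eq_zero {x : Q.Rep K γ} (hloop : ∀ a, Q.dt a = i0 → Q.dh a ≠ i0)
    {v : Fin (γ i0) → K} (hv : v ≠ 0) (hx : ∀ a, v ᵥ* ((incl K γ i0)ᵀ * totalMap x a) = 0) :
    Q.HasSFactor K γ i0 x := by
  let w (i : Q.I) : Fin (γ i) → K := v ᵥ* ((incl K γ i0)ᵀ * incl K γ i)
  have hxw (a : Q.DA) : w (Q.dh a) ᵥ* x a = 0 := by
    rw [Matrix.vecMul_vecMul, Matrix.mul_assoc, ← totalMap_mul_incl, ← Matrix.mul_assoc,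
      ← Matrix.vecMul_vecMul, hx, Matrix.zero_vecMul]
  refine ⟨fun i => LinearMap.ker (dotProductEquiv K _ (w i)), fun _ => ⊤, fun a u _ => ?_,
    fun _ _ _ => Submodule.mem_top, fun _ => le_top, fun i => ?_,
    fun a hh ht => absurd hh (hloop a ht)⟩
  · change w _ ⬝ᵥ (x a *ᵥ u) = 0
    rw [Matrix.dotProduct_mulVec, hxw, zero_dotProduct]
  · obtain rfl | hi := eq_or_ne i i0
    · have hw : w i = v := by simp only [w, incl_transpose_mul_incl_self, Matrix.vecMul_one]
      have hne : dotProductEquiv K (Fin (γ i)) v ≠ 0 :=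
        (dotProductEquiv K _).map_ne_zero_iff.2 hv
      beta_reduce
      rw [hw, if_pos rfl, finrank_top, Module.Dual.finrank_ker_add_one_of_ne_zero hne]
    · have hw : w i = 0 := by
        simp only [w, incl_transpose_mul_incl_of_ne hi.symm, Matrix.vecMul_zero]
      beta_reduce
      rw [hw, if_neg hi, map_zero, LinearMap.ker_zero, add_zero]

theorem hasSFactor_of_mem_momentFiber {l : Q.I → K} {x : Q.Rep K γ}
    (hx : x ∈ Q.MomentFiber K l γ) (hl : l i0 = 0)
    (hloop : ∀ a, Q.dt a = i0 → Q.dh a ≠ i0)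
    (hdim : ∑ a : {a : Q.DA // Q.dt a = i0}, γ (Q.dh a.1) < 2 * γ i0) :
    Q.HasSFactor K γ i0 x := by
  obtain ⟨v, hv, hout | hin⟩ := exists_killed_vector hx hl hdim
  · exact hasSFactor_of_mulVec_eq_zero hloop hv hout
  · exact hasSFactor_of_vecMul_eq_zero hloop hv hin

end CompositionFactor
end FinQuiver

/-! ### Splitting off a simple module -/

section Matrix

open scoped Matrix

variable {K : Type*} [Field K] {m n : ℕ}

/- `J` and `P` are the inclusion of the hyperplane `φ = 0` and the projection onto it along `v`. -/
theorem exists_mul_eq_one_sub_vecMulVec (hmn : m + 1 = n) {φ v : Fin n → K} (hφv : φ ⬝ᵥ v = 1) :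
    ∃ (J : Matrix (Fin n) (Fin m) K) (P : Matrix (Fin m) (Fin n) K),
      P * J = 1 ∧ J * P = 1 - Matrix.vecMulVec v φ := by
  let f := dotProductEquiv K (Fin n) φ
  have hf : f ≠ 0 := fun h => one_ne_zero (hφv.symm.trans (LinearMap.congr_fun h v))
  have hrank : Module.finrank K (Fin m → K) = Module.finrank K (LinearMap.ker f) := by
    have := Module.Dual.finrank_ker_add_one_of_ne_zero hf
    rw [Module.finrank_fin_fun] at this ⊢
    lia
  let e := LinearEquiv.ofFinrankEq _ _ hrank
  let π : (Fin n → K) →ₗ[K] LinearMap.ker f :=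
    (LinearMap.id - f.smulRight v).codRestrict (LinearMap.ker f) fun u => by
      have hfv : f v = 1 := hφv
      simp [hfv]
  have hπ (u : LinearMap.ker f) : π u = u := by
    have hu : f u = 0 := u.2
    refine Subtype.ext ?_
    change u.1 - f u • v = u
    rw [hu, zero_smul, sub_zero]
  refine ⟨LinearMap.toMatrix' ((LinearMap.ker f).subtype ∘ₗ e.toLinearMap),
    LinearMap.toMatrix' (e.symm.toLinearMap ∘ₗ π), ?_, ?_⟩
  · rw [← LinearMap.toMatrix'_comp, ← LinearMap.toMatrix'_id]
    refine congrArg _ (LinearMap.ext fun u => ?_)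
    exact (congrArg e.symm (hπ (e u))).trans (e.symm_apply_apply u)
  · rw [← LinearMap.toMatrix'_comp, ← LinearEquiv.eq_symm_apply, LinearMap.toMatrix'_symm]
    refine LinearMap.ext fun u => ?_
    calc (e (e.symm (π u)) : Fin n → K) = u - f u • v := by rw [e.apply_symm_apply]; rfl
      _ = (1 - Matrix.vecMulVec v φ) *ᵥ u := by
        rw [Matrix.sub_mulVec, Matrix.one_mulVec, Matrix.vecMulVec_mulVec, op_smul_eq_smul]
        rfl

lemma exists_units_eq_mul_mul {J : Matrix (Fin n) (Fin m) K} {P : Matrix (Fin m) (Fin n) K}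
    (hPJ : P * J = 1) (hJP : J * P = 1) (g : GL (Fin m) K) :
    ∃ g' : GL (Fin n) K, g'.1 = J * g.1 * P ∧ g'⁻¹.1 = J * g⁻¹.1 * P := by
  have hmul {M N : Matrix (Fin m) (Fin m) K} (hMN : M * N = 1) :
      J * M * P * (J * N * P) = 1 :=
    calc J * M * P * (J * N * P) = J * (M * (P * J) * N) * P := by simp only [Matrix.mul_assoc]
      _ = 1 := by rw [hPJ, Matrix.mul_one, hMN, Matrix.mul_one, hJP]
  exact ⟨⟨J * g.1 * P, J * g⁻¹.1 * P, hmul g.mul_inv, hmul g.inv_mul⟩, rfl, rfl⟩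

end Matrix

namespace FinQuiver

variable {Q : FinQuiver} {K : Type} [Field K] {β γ : Q.I → ℕ} {i0 : Q.I}

/-- Presentations of the spaces `K ^ β i` as retracts of the spaces `K ^ γ i`. -/
structure Retract (K : Type) [Field K] (β γ : Q.I → ℕ) where
  inj : ∀ i, Matrix (Fin (γ i)) (Fin (β i)) K
  proj : ∀ i, Matrix (Fin (β i)) (Fin (γ i)) K
  proj_mul_inj : ∀ i, proj i * inj i = 1

namespace Retract

lemma inj_mul_proj (r : Retract K β γ) {i : Q.I} (hi : β i = γ i) : r.inj i * r.proj i = 1 :=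
  (Matrix.mul_eq_one_comm_of_card_eq _ _ _ (by simpa using hi)).1 (r.proj_mul_inj i)

/-- The coordinate subspaces spanned by the first `β i` of the `γ i` basis vectors. -/
def castLE (K : Type) [Field K] (h : ∀ i, β i ≤ γ i) : Retract K β γ where
  inj i := (1 : Matrix (Fin (γ i)) (Fin (γ i)) K).submatrix id (Fin.castLE (h i))
  proj i := (1 : Matrix (Fin (γ i)) (Fin (γ i)) K).submatrix (Fin.castLE (h i)) id
  proj_mul_inj i := by
    rw [← Matrix.submatrix_mul _ _ _ _ _ Function.bijective_id, Matrix.one_mul,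
      Matrix.submatrix_one _ (Fin.castLE_injective (h i))]

lemma exists_update (r : Retract K β γ) (hdim : β i0 + 1 = γ i0) {φ v : Fin (γ i0) → K}
    (hφv : dotProduct φ v = 1) : ∃ s : Retract K β γ,
      (∀ i ≠ i0, s.inj i = r.inj i ∧ s.proj i = r.proj i) ∧
        s.inj i0 * s.proj i0 = 1 - Matrix.vecMulVec v φ := by
  obtain ⟨J, P, hPJ, hJP⟩ := exists_mul_eq_one_sub_vecMulVec hdim hφv
  refine ⟨⟨Function.update r.inj i0 J, Function.update r.proj i0 P, fun i => ?_⟩,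
    fun i hi => ⟨Function.update_of_ne hi _ _, Function.update_of_ne hi _ _⟩, ?_⟩
  · obtain rfl | hi := eq_or_ne i i0
    · simpa only [Function.update_self] using hPJ
    · simpa only [Function.update_of_ne hi] using r.proj_mul_inj i
  · simpa only [Function.update_self] using hJP

/-- The direct sum of a representation with a zero representation. -/
def extend (r : Retract K β γ) (z : Q.Rep K β) : Q.Rep K γ := transport r.inj r.proj z

lemma extend_mem_momentFiber (r : Retract K β γ) (hne : ∀ i ≠ i0, β i = γ i) {l : Q.I → K}
    (hl : l i0 = 0) {z : Q.Rep K β} (hz : z ∈ Q.MomentFiber K l β) :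
    r.extend z ∈ Q.MomentFiber K l γ := by
  refine transport_mem_momentFiber_of_mul_eq_one hz (fun i => ?_) r.proj_mul_inj
  obtain rfl | hi := eq_or_ne i i0
  · rw [hl, zero_smul, zero_smul]
  · rw [r.inj_mul_proj (hne i hi)]

lemma sameContraction_extend_glAct (r : Retract K β γ) (z : Q.Rep K β) {g : Q.Gl K β}
    {g' : Q.Gl K γ} (hinj : ∀ i ≠ i0, r.inj i * (g i).1 = (g' i).1 * r.inj i)
    (hproj : ∀ i ≠ i0, (g i)⁻¹.1 * r.proj i = r.proj i * (g' i)⁻¹.1) :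
    SameContraction i0 (r.extend (Q.glAct K β g z)) (Q.glAct K γ g' (r.extend z)) := by
  rw [extend, extend, glAct_eq_transport, glAct_eq_transport, transport_transport,
    transport_transport]
  refine sameContraction_transport hinj hproj (fun a b => ?_) fun a b => ?_
  · have hone : (g i0)⁻¹.1 * r.proj i0 * (r.inj i0 * (g i0).1) = 1 := by
      rw [Matrix.mul_assoc, ← Matrix.mul_assoc (r.proj i0), r.proj_mul_inj, Matrix.one_mul,
        Units.inv_mul]
    rw [hone, Matrix.mul_one]
  · have hone : r.proj i0 * (g' i0)⁻¹.1 * ((g' i0).1 * r.inj i0) = 1 := by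
      rw [Matrix.mul_assoc, ← Matrix.mul_assoc _ (g' i0).1, Units.inv_mul, Matrix.one_mul,
        r.proj_mul_inj]
    rw [hone, Matrix.mul_one]

lemma exists_sameContraction_glAct_extend (r : Retract K β γ) (hne : ∀ i ≠ i0, β i = γ i)
    (z : Q.Rep K β) (g : Q.Gl K β) : ∃ g' : Q.Gl K γ,
      SameContraction i0 (r.extend (Q.glAct K β g z)) (Q.glAct K γ g' (r.extend z)) := by
  have hex (i : Q.I) : ∃ g' : GL (Fin (γ i)) K, i ≠ i0 →
      g'.1 = r.inj i * (g i).1 * r.proj i ∧ g'⁻¹.1 = r.inj i * (g i)⁻¹.1 * r.proj i := by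
    obtain rfl | hi := eq_or_ne i i0
    · exact ⟨1, fun h => absurd rfl h⟩
    · obtain ⟨g', hg'⟩ := exists_units_eq_mul_mul (r.proj_mul_inj i) (r.inj_mul_proj (hne i hi))
        (g i)
      exact ⟨g', fun _ => hg'⟩
  choose g' hg' using hex
  refine ⟨g', r.sameContraction_extend_glAct z (fun i hi => ?_) fun i hi => ?_⟩
  · rw [(hg' i hi).1, Matrix.mul_assoc _ (r.proj i), r.proj_mul_inj, Matrix.mul_one]
  · rw [(hg' i hi).2, Matrix.mul_assoc, ← Matrix.mul_assoc (r.proj i), r.proj_mul_inj,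
      Matrix.one_mul]

lemma exists_sameContraction_extend_glAct (r : Retract K β γ) (hne : ∀ i ≠ i0, β i = γ i)
    (z : Q.Rep K β) (g : Q.Gl K γ) : ∃ g' : Q.Gl K β,
      SameContraction i0 (r.extend (Q.glAct K β g' z)) (Q.glAct K γ g (r.extend z)) := by
  have hex (i : Q.I) : ∃ g' : GL (Fin (β i)) K, i ≠ i0 →
      g'.1 = r.proj i * (g i).1 * r.inj i ∧ g'⁻¹.1 = r.proj i * (g i)⁻¹.1 * r.inj i := by
    obtain rfl | hi := eq_or_ne i i0
    · exact ⟨1, fun h => absurd rfl h⟩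
    · obtain ⟨g', hg'⟩ := exists_units_eq_mul_mul (r.inj_mul_proj (hne i hi)) (r.proj_mul_inj i)
        (g i)
      exact ⟨g', fun _ => hg'⟩
  choose g' hg' using hex
  refine ⟨g', r.sameContraction_extend_glAct z (fun i hi => ?_) fun i hi => ?_⟩
  · rw [(hg' i hi).1, Matrix.mul_assoc, ← Matrix.mul_assoc, r.inj_mul_proj (hne i hi),
      Matrix.one_mul]
  · rw [(hg' i hi).2, Matrix.mul_assoc, r.inj_mul_proj (hne i hi), Matrix.mul_one]

end Retract

end FinQuiver

namespace FinQuiver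

variable {Q : FinQuiver} {K : Type} [Field K] {β γ : Q.I → ℕ} {i0 : Q.I}

section Truncation

open scoped Matrix
open Matrix (blockDiagonal' vecMulVec)

lemma blockDiagonal'_eq_one_sub {M : ∀ i, Matrix (Fin (γ i)) (Fin (γ i)) K}
    (hM : ∀ i ≠ i0, M i = 1) {N : Matrix (Fin (γ i0)) (Fin (γ i0)) K} (hN : M i0 = 1 - N) :
    blockDiagonal' M = 1 - incl K γ i0 * N * (incl K γ i0)ᵀ := by
  calc blockDiagonal' M
      = blockDiagonal' M * (awayProj K γ i0 + incl K γ i0 * (incl K γ i0)ᵀ) := by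
        rw [awayProj_add_incl_mul_transpose, Matrix.mul_one]
    _ = blockDiagonal' 1 * awayProj K γ i0 +
          incl K γ i0 * M i0 * (incl K γ i0)ᵀ := by
        rw [Matrix.mul_add, blockDiagonal'_mul_awayProj_congr (L' := 1) hM, ← Matrix.mul_assoc,
          blockDiagonal'_mul_incl]
    _ = awayProj K γ i0 + incl K γ i0 * (incl K γ i0)ᵀ - incl K γ i0 * N * (incl K γ i0)ᵀ := by
        rw [hN, Matrix.blockDiagonal'_one, Matrix.one_mul, Matrix.mul_sub, Matrix.sub_mul,
          Matrix.mul_one, add_sub_assoc]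
    _ = 1 - incl K γ i0 * N * (incl K γ i0)ᵀ := by rw [awayProj_add_incl_mul_transpose]

lemma exists_killed_projection {l : Q.I → K} {x : Q.Rep K γ} (hx : x ∈ Q.MomentFiber K l γ)
    (hl : l i0 = 0) (hdim : ∑ a : {a : Q.DA // Q.dt a = i0}, γ (Q.dh a.1) < 2 * γ i0) :
    ∃ φ v : Fin (γ i0) → K, φ ⬝ᵥ v = 1 ∧ ∀ a b,
      totalMap x a * (incl K γ i0 * vecMulVec v φ * (incl K γ i0)ᵀ) * totalMap x b = 0 := by
  obtain ⟨v, hv, hkill⟩ := exists_killed_vector hx hl hdim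
  obtain ⟨k, hk⟩ := Function.ne_iff.1 hv
  obtain hout | hin := hkill
  · refine ⟨Pi.single k (v k)⁻¹, v, by rw [single_dotProduct, inv_mul_cancel₀ hk], fun a b => ?_⟩
    simp only [← Matrix.mul_assoc]
    rw [Matrix.mul_vecMulVec, hout]
    simp only [Matrix.zero_vecMulVec, Matrix.zero_mul]
  · refine ⟨v, Pi.single k (v k)⁻¹, by rw [dotProduct_single, mul_inv_cancel₀ hk], fun a b => ?_⟩
    have hzero : vecMulVec (Pi.single k (v k)⁻¹) v * ((incl K γ i0)ᵀ * totalMap x b) = 0 := by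
      rw [Matrix.vecMulVec_mul, hin]
      exact Matrix.ext fun _ _ => mul_zero _
    simp only [Matrix.mul_assoc]
    rw [hzero, Matrix.mul_zero, Matrix.mul_zero]

lemma fromVertex_mul_mul_toVertex_eq_zero {x : Q.Rep K γ} {a b : Q.DA}
    {N : Matrix (Fin (γ i0)) (Fin (γ i0)) K}
    (h : totalMap x a * (incl K γ i0 * N * (incl K γ i0)ᵀ) * totalMap x b = 0) :
    fromVertex i0 x a * N * toVertex i0 x b = 0 :=
  calc fromVertex i0 x a * N * toVertex i0 x b = awayProj K γ i0 *
      (totalMap x a * (incl K γ i0 * N * (incl K γ i0)ᵀ) * totalMap x b) * awayProj K γ i0 := by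
        simp only [fromVertex, toVertex, Matrix.mul_assoc]
    _ = 0 := by rw [h, Matrix.mul_zero, Matrix.zero_mul]

/- Truncating `x` along the killed projection splits off a copy of the simple module at `i0`. -/
theorem Retract.exists_sameContraction_extend (r : Retract K β γ) (hβ : β i0 + 1 = γ i0)
    (hne : ∀ i ≠ i0, β i = γ i) {l : Q.I → K} {x : Q.Rep K γ} (hx : x ∈ Q.MomentFiber K l γ)
    (hl : l i0 = 0) (hdim : ∑ a : {a : Q.DA // Q.dt a = i0}, γ (Q.dh a.1) < 2 * γ i0) :
    ∃ z ∈ Q.MomentFiber K l β, SameContraction i0 (r.extend z) x := by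
  obtain ⟨φ, v, hφv, hkill⟩ := exists_killed_projection hx hl hdim
  obtain ⟨s, hs, hs0⟩ := r.exists_update hβ hφv
  have hD : blockDiagonal' (fun i => s.inj i * s.proj i) =
      1 - incl K γ i0 * vecMulVec v φ * (incl K γ i0)ᵀ :=
    blockDiagonal'_eq_one_sub (fun i hi => s.inj_mul_proj (hne i hi)) hs0
  refine ⟨transport s.proj s.inj x, transport_mem_momentFiber hx
    (fun i => by rw [s.proj_mul_inj]) fun a => ?_, ?_⟩
  · rw [hD, Matrix.mul_sub, Matrix.mul_one, Matrix.sub_mul, hkill, sub_zero]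
  · rw [Retract.extend, transport_transport]
    nth_rw 2 [← transport_one x]
    refine sameContraction_transport (fun i hi => ?_) (fun i hi => ?_) (fun a b => ?_) fun a b => ?_
    · rw [(hs i hi).2, r.inj_mul_proj (hne i hi)]
    · rw [(hs i hi).1, r.inj_mul_proj (hne i hi)]
    · have hRL : s.inj i0 * r.proj i0 * (r.inj i0 * s.proj i0) = 1 - vecMulVec v φ := by
        rw [Matrix.mul_assoc, ← Matrix.mul_assoc (r.proj i0), r.proj_mul_inj, Matrix.one_mul, hs0]
      rw [hRL, Matrix.mul_sub, Matrix.mul_one, Matrix.sub_mul,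
        fromVertex_mul_mul_toVertex_eq_zero (hkill a b), sub_zero]
    · simp only [Matrix.mul_one]

end Truncation
end FinQuiver

/-! ### Invariants and contractions -/

section EntriesIn

variable {K Z m n k : Type*} [Field K] {S : Subalgebra K (Z → K)}

/-- The entries of a matrix-valued function belong to the algebra of functions `S`. -/
def EntriesIn (S : Subalgebra K (Z → K)) (M : Z → Matrix m n K) : Prop :=
  ∀ i j, (fun z => M z i j) ∈ S

namespace EntriesIn

lemma const (M : Matrix m n K) : EntriesIn S fun _ => M :=
  fun i j => S.algebraMap_mem (M i j)

lemma add {M N : Z → Matrix m n K} (hM : EntriesIn S M) (hN : EntriesIn S N) :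
    EntriesIn S fun z => M z + N z :=
  fun i j => S.add_mem (hM i j) (hN i j)

lemma mul [Fintype n] {M : Z → Matrix m n K} {N : Z → Matrix n k K} (hM : EntriesIn S M)
    (hN : EntriesIn S N) : EntriesIn S fun z => M z * N z := fun i j => by
  have hsum : (fun z => (M z * N z) i j) = ∑ s, (fun z => M z i s) * fun z => N z s j := by
    ext z
    simp only [Matrix.mul_apply, Finset.sum_apply, Pi.mul_apply]
  rw [hsum]
  exact S.sum_mem fun s _ => S.mul_mem (hM i s) (hN s j)

end EntriesIn

end EntriesIn

namespace FinQuiver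

variable {Q : FinQuiver} {K : Type} [Field K] {γ : Q.I → ℕ} {i0 : Q.I} {l : Q.I → K}

section ContractionAlgebra

open scoped Matrix

lemma entriesIn_fnRing (V : Set (Q.Rep K γ)) (a : Q.DA) :
    EntriesIn (Q.fnRing K γ V) fun z => z.1 a :=
  fun p q => ⟨MvPolynomial.X ⟨a, p, q⟩, MvPolynomial.aeval_X _ _⟩

lemma fnRing_le {V : Set (Q.Rep K γ)} {S : Subalgebra K (V → K)}
    (hS : ∀ a, EntriesIn S fun z => z.1 a) : Q.fnRing K γ V ≤ S := by
  rw [fnRing, ← Algebra.adjoin_range_eq_range_aeval, Algebra.adjoin_le_iff]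
  rintro _ ⟨⟨a, p, q⟩, rfl⟩
  exact hS a p q

/-- The algebra generated by the contractions at `i0`: the entries of the composites through `i0`
and of the arrows away from `i0`. -/
def contractionAlg (l : Q.I → K) (γ : Q.I → ℕ) (i0 : Q.I) :
    Subalgebra K (Q.MomentFiber K l γ → K) :=
  Algebra.adjoin K
    ({f | ∃ a b p q, f = fun z => (fromVertex i0 z.1 a * toVertex i0 z.1 b) p q} ∪
      {f | ∃ a p q, f = fun z => awayPart i0 z.1 a p q})

lemma entriesIn_contractionAlg_fromVertex_mul_toVertex (a b : Q.DA) :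
    EntriesIn (contractionAlg l γ i0) fun z => fromVertex i0 z.1 a * toVertex i0 z.1 b :=
  fun p q => Algebra.subset_adjoin (Or.inl ⟨a, b, p, q, rfl⟩)

lemma entriesIn_contractionAlg_awayPart (a : Q.DA) :
    EntriesIn (contractionAlg l γ i0) fun z => awayPart i0 z.1 a :=
  fun p q => Algebra.subset_adjoin (Or.inr ⟨a, p, q, rfl⟩)

lemma contractionAlg_le {S : Subalgebra K (Q.MomentFiber K l γ → K)}
    (h : ∀ a b, EntriesIn S fun z => fromVertex i0 z.1 a * toVertex i0 z.1 b)
    (h' : ∀ a, EntriesIn S fun z => awayPart i0 z.1 a) : contractionAlg l γ i0 ≤ S := by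
  rw [contractionAlg, Algebra.adjoin_le_iff]
  rintro _ (⟨a, b, p, q, rfl⟩ | ⟨a, p, q, rfl⟩)
  · exact h a b p q
  · exact h' a p q

lemma contractionAlg_le_fnRing : contractionAlg l γ i0 ≤ Q.fnRing K γ (Q.MomentFiber K l γ) := by
  have hX (a : Q.DA) : EntriesIn (Q.fnRing K γ (Q.MomentFiber K l γ)) fun z => totalMap z.1 a :=
    ((EntriesIn.const _).mul (entriesIn_fnRing _ a)).mul (.const _)
  exact contractionAlg_le
    (fun a b => (((EntriesIn.const _).mul (hX a)).mul (.const _)).mul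
      (((EntriesIn.const _).mul (hX b)).mul (.const _)))
    fun a => ((EntriesIn.const _).mul (hX a)).mul (.const _)

lemma eval_eq_eval_of_sameContraction {f : Q.MomentFiber K l γ → K}
    (hf : f ∈ contractionAlg l γ i0) {x y : Q.MomentFiber K l γ}
    (hxy : SameContraction i0 x.1 y.1) : f x = f y := by
  refine eval_eq_eval_of_mem_adjoin ?_ hf
  rintro _ (⟨a, b, p, q, rfl⟩ | ⟨a, p, q, rfl⟩)
  · exact congrFun (congrFun (hxy.1 a b) p) q
  · exact congrFun (congrFun (hxy.2 a) p) q

lemma fnRing_le_of_entriesIn (hloop : ∀ a, Q.dt a = i0 → Q.dh a ≠ i0)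
    {V : Set (Q.Rep K γ)} {S : Subalgebra K (V → K)}
    (hfrom : ∀ a, EntriesIn S fun z => fromVertex i0 z.1 a)
    (hto : ∀ a, EntriesIn S fun z => toVertex i0 z.1 a)
    (haway : ∀ a, EntriesIn S fun z => awayPart i0 z.1 a) : Q.fnRing K γ V ≤ S := by
  refine fnRing_le fun a => ?_
  have hX : EntriesIn S fun z => totalMap z.1 a := by
    simp only [totalMap_eq_add hloop]
    exact ((haway a).add ((hfrom a).mul (.const _))).add ((EntriesIn.const _).mul (hto a))
  simpa only [incl_transpose_mul_totalMap_mul_incl] using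
    ((EntriesIn.const (incl K γ (Q.dh a))ᵀ).mul hX).mul (.const (incl K γ (Q.dt a)))

/-- The element of `Gl` acting through `g` at `i0` and trivially at the other vertices. -/
def glSingle (i0 : Q.I) (g : GL (Fin (γ i0)) K) : Q.Gl K γ :=
  Function.update (fun _ => 1) i0 g

lemma glSingle_self (g : GL (Fin (γ i0)) K) : glSingle i0 g i0 = g := Function.update_self ..

lemma glSingle_val_of_ne (g : GL (Fin (γ i0)) K) {i : Q.I} (hi : i ≠ i0) :
    (glSingle i0 g i).1 = 1 := by
  rw [glSingle, Function.update_of_ne hi, Units.val_one]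

lemma glSingle_inv_val_of_ne (g : GL (Fin (γ i0)) K) {i : Q.I} (hi : i ≠ i0) :
    (glSingle i0 g i)⁻¹.1 = 1 := by
  rw [glSingle, Function.update_of_ne hi, inv_one, Units.val_one]

lemma fromVertex_glAct_glSingle (g : GL (Fin (γ i0)) K) (x : Q.Rep K γ) (a : Q.DA) :
    fromVertex i0 (Q.glAct K γ (glSingle i0 g) x) a = fromVertex i0 x a * g⁻¹.1 := by
  rw [glAct_eq_transport, fromVertex_transport,
    blockDiagonal'_mul_fromVertex_congr (L' := 1) fun i => glSingle_val_of_ne g,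
    Matrix.blockDiagonal'_one, Matrix.one_mul, glSingle_self]

lemma toVertex_glAct_glSingle (g : GL (Fin (γ i0)) K) (x : Q.Rep K γ) (a : Q.DA) :
    toVertex i0 (Q.glAct K γ (glSingle i0 g) x) a = g.1 * toVertex i0 x a := by
  rw [glAct_eq_transport, toVertex_transport, Matrix.mul_assoc,
    toVertex_mul_blockDiagonal'_congr (R' := 1) fun i => glSingle_inv_val_of_ne g,
    Matrix.blockDiagonal'_one, Matrix.mul_one, glSingle_self]

lemma awayPart_glAct_glSingle (g : GL (Fin (γ i0)) K) (x : Q.Rep K γ) (a : Q.DA) :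
    awayPart i0 (Q.glAct K γ (glSingle i0 g) x) a = awayPart i0 x a := by
  rw [glAct_eq_transport, awayPart_transport,
    blockDiagonal'_mul_awayPart_mul_congr (L' := 1) (R' := 1) (fun i => glSingle_val_of_ne g)
      fun i => glSingle_inv_val_of_ne g,
    Matrix.blockDiagonal'_one, Matrix.one_mul, Matrix.mul_one]

theorem invRing_le_contractionAlg [CharZero K] (hloop : ∀ a, Q.dt a = i0 → Q.dh a ≠ i0) :
    Q.InvRing K l γ ≤ contractionAlg l γ i0 := by
  classical
  rintro f ⟨hf, hinv⟩
  let A : Matrix (Q.DA × Tot γ) (Fin (γ i0)) (Q.MomentFiber K l γ → K) :=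
    Matrix.of fun p k z => fromVertex i0 z.1 p.1 p.2 k
  let B : Matrix (Fin (γ i0)) (Q.DA × Tot γ) (Q.MomentFiber K l γ → K) :=
    Matrix.of fun k q z => toVertex i0 z.1 q.1 k q.2
  let C : Q.DA × Tot γ × Tot γ → Q.MomentFiber K l γ → K :=
    fun s z => awayPart i0 z.1 s.1 s.2.1 s.2.2
  have hfS : f ∈ Algebra.adjoin K
      (Set.range (Function.uncurry A) ∪ Set.range (Function.uncurry B) ∪ Set.range C) :=
    fnRing_le_of_entriesIn hloop
      (fun a p k => Algebra.subset_adjoin (Or.inl (Or.inl ⟨((a, p), k), rfl⟩)))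
      (fun a k q => Algebra.subset_adjoin (Or.inl (Or.inr ⟨(k, (a, q)), rfl⟩)))
      (fun a p q => Algebra.subset_adjoin (Or.inr ⟨(a, p, q), rfl⟩)) hf
  refine Algebra.adjoin_le ?_ (mem_adjoin_mul_of_GL_invariant hfS fun g z => ?_)
  · rintro _ (⟨⟨⟨a, p⟩, b, q⟩, rfl⟩ | ⟨⟨a, p, q⟩, rfl⟩)
    · have hAB : (A * B) (a, p) (b, q) =
          fun z => (fromVertex i0 z.1 a * toVertex i0 z.1 b) p q := by
        ext z
        simp [A, B, Matrix.mul_apply]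
      exact (congrArg (· ∈ contractionAlg l γ i0) hAB).mpr
        (entriesIn_contractionAlg_fromVertex_mul_toVertex a b p q)
    · exact entriesIn_contractionAlg_awayPart a p q
  · let h : GL (Fin (γ i0)) K := Matrix.GeneralLinearGroup.map (algebraMap ℚ K) g⁻¹
    have hh : h⁻¹ = Matrix.GeneralLinearGroup.map (algebraMap ℚ K) g := by
      rw [← map_inv, inv_inv]
    refine ⟨⟨_, glAct_mem_momentFiber z.2 (glSingle i0 h)⟩, ?_, ?_, fun s => ?_,
      hinv _ _ ⟨_, rfl⟩⟩
    · ext ⟨a, p⟩ k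
      exact (congrFun (congrFun (fromVertex_glAct_glSingle h z.1 a) p) k).trans (by rw [hh]; rfl)
    · ext k ⟨a, q⟩
      exact congrFun (congrFun (toVertex_glAct_glSingle h z.1 a) k) q
    · exact (congrFun (congrFun (awayPart_glAct_glSingle h z.1 s.1) s.2.1) s.2.2).symm

end ContractionAlgebra
end FinQuiver

namespace FinQuiver

variable {Q : FinQuiver} {K : Type} [Field K] {β γ : Q.I → ℕ} {i0 : Q.I} {l : Q.I → K}

namespace Retract

open Matrix (blockDiagonal')

lemma blockDiagonal'_proj_mul_mul_inj (r : Retract K β γ) (M : Matrix (Tot β) (Tot β) K) :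
    blockDiagonal' r.proj * (blockDiagonal' r.inj * M * blockDiagonal' r.proj) *
      blockDiagonal' r.inj = M := by
  have hone : blockDiagonal' r.proj * blockDiagonal' r.inj = 1 := by
    rw [← Matrix.blockDiagonal'_mul, ← Matrix.blockDiagonal'_one]
    exact congrArg blockDiagonal' (funext r.proj_mul_inj)
  rw [Matrix.mul_assoc, Matrix.mul_assoc _ _ (blockDiagonal' r.inj), hone, Matrix.mul_one,
    ← Matrix.mul_assoc, hone, Matrix.one_mul]

lemma fromVertex_mul_toVertex_extend (r : Retract K β γ) (z : Q.Rep K β) (a b : Q.DA) :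
    fromVertex i0 z a * toVertex i0 z b = blockDiagonal' r.proj *
      (fromVertex i0 (r.extend z) a * toVertex i0 (r.extend z) b) * blockDiagonal' r.inj := by
  rw [extend, fromVertex_mul_toVertex_transport (by rw [r.proj_mul_inj, Matrix.mul_one]),
    r.blockDiagonal'_proj_mul_mul_inj]

lemma awayPart_extend (r : Retract K β γ) (z : Q.Rep K β) (a : Q.DA) :
    awayPart i0 z a =
      blockDiagonal' r.proj * awayPart i0 (r.extend z) a * blockDiagonal' r.inj := by
  rw [extend, awayPart_transport, r.blockDiagonal'_proj_mul_mul_inj]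

variable (r : Retract K β γ) (hne : ∀ i ≠ i0, β i = γ i) (hl : l i0 = 0)

/-- Restriction of functions along `extend`, between the fibres of the moment maps. -/
def pullback : (Q.MomentFiber K l γ → K) →ₐ[K] (Q.MomentFiber K l β → K) :=
  AlgHom.pi fun z => Pi.evalAlgHom K _ ⟨r.extend z.1, r.extend_mem_momentFiber hne hl z.2⟩

lemma pullback_mem_fnRing {f : Q.MomentFiber K l γ → K}
    (hf : f ∈ Q.fnRing K γ (Q.MomentFiber K l γ)) :
    r.pullback hne hl f ∈ Q.fnRing K β (Q.MomentFiber K l β) :=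
  fnRing_le (S := (Q.fnRing K β (Q.MomentFiber K l β)).comap (r.pullback hne hl))
    (fun a => ((EntriesIn.const (r.inj _)).mul (entriesIn_fnRing _ a)).mul (.const (r.proj _))) hf

lemma contractionAlg_le_map_pullback :
    contractionAlg l β i0 ≤ (contractionAlg l γ i0).map (r.pullback hne hl) := by
  have hmap {m : Type} {M : Q.MomentFiber K l γ → Matrix m m K}
      (hM : EntriesIn (contractionAlg l γ i0) M) :
      EntriesIn ((contractionAlg l γ i0).map (r.pullback hne hl))
        fun z => M ⟨r.extend z.1, r.extend_mem_momentFiber hne hl z.2⟩ :=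
    fun i j => ⟨_, hM i j, rfl⟩
  refine contractionAlg_le (fun a b => ?_) fun a => ?_
  · simp only [r.fromVertex_mul_toVertex_extend]
    exact ((EntriesIn.const _).mul
      (hmap (entriesIn_contractionAlg_fromVertex_mul_toVertex a b))).mul (.const _)
  · simp only [r.awayPart_extend]
    exact ((EntriesIn.const _).mul (hmap (entriesIn_contractionAlg_awayPart a))).mul (.const _)

lemma mem_invRing_of_pullback_mem
    (hlift : ∀ x ∈ Q.MomentFiber K l γ, ∃ z ∈ Q.MomentFiber K l β,
      SameContraction i0 (r.extend z) x)
    {k : Q.MomentFiber K l γ → K} (hk : k ∈ contractionAlg l γ i0)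
    (hpull : r.pullback hne hl k ∈ Q.InvRing K l β) :
    k ∈ Q.InvRing K l γ := by
  refine ⟨contractionAlg_le_fnRing hk, ?_⟩
  rintro x ⟨_, hy⟩ ⟨g, rfl⟩
  obtain ⟨z, hz, hzx⟩ := hlift x.1 x.2
  obtain ⟨g', hg'⟩ := r.exists_sameContraction_extend_glAct hne z g
  have hgzx : SameContraction i0 (Q.glAct K γ g (r.extend z)) (Q.glAct K γ g x.1) := by
    rw [glAct_eq_transport, glAct_eq_transport]
    exact hzx.transport (Units.inv_mul (g i0))
  calc k x = r.pullback hne hl k ⟨z, hz⟩ := eval_eq_eval_of_sameContraction hk hzx.symm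
    _ = r.pullback hne hl k ⟨Q.glAct K β g' z, glAct_mem_momentFiber hz g'⟩ :=
      hpull.2 _ _ ⟨g', rfl⟩
    _ = k ⟨Q.glAct K γ g x.1, hy⟩ := eval_eq_eval_of_sameContraction hk (hg'.trans hgzx)

variable [CharZero K] (hloop : ∀ a, Q.dt a = i0 → Q.dh a ≠ i0)

include hloop

lemma pullback_mem_invRing {f : Q.MomentFiber K l γ → K} (hf : f ∈ Q.InvRing K l γ) :
    r.pullback hne hl f ∈ Q.InvRing K l β := by
  refine ⟨r.pullback_mem_fnRing hne hl hf.1, ?_⟩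
  rintro z ⟨_, hy⟩ ⟨g, rfl⟩
  obtain ⟨g', hg'⟩ := r.exists_sameContraction_glAct_extend hne z.1 g
  have hx := r.extend_mem_momentFiber hne hl z.2
  calc f ⟨r.extend z.1, hx⟩
      = f ⟨Q.glAct K γ g' (r.extend z.1), glAct_mem_momentFiber hx g'⟩ := hf.2 _ _ ⟨g', rfl⟩
    _ = f ⟨r.extend (Q.glAct K β g z.1), r.extend_mem_momentFiber hne hl hy⟩ :=
      eval_eq_eval_of_sameContraction (invRing_le_contractionAlg hloop hf) hg'.symm

variable (hlift : ∀ x ∈ Q.MomentFiber K l γ, ∃ z ∈ Q.MomentFiber K l β,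
  SameContraction i0 (r.extend z) x)

include hlift

lemma pullback_injOn_invRing :
    Set.InjOn (r.pullback hne hl) (Q.InvRing K l γ : Set (Q.MomentFiber K l γ → K)) := by
  intro f hf f' hf' hff'
  ext x
  obtain ⟨z, hz, hzx⟩ := hlift x.1 x.2
  calc f x = r.pullback hne hl f ⟨z, hz⟩ :=
      eval_eq_eval_of_sameContraction (invRing_le_contractionAlg hloop hf) hzx.symm
    _ = r.pullback hne hl f' ⟨z, hz⟩ := congrFun hff' _
    _ = f' x := eval_eq_eval_of_sameContraction (invRing_le_contractionAlg hloop hf') hzx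

include hne hl in
theorem nonempty_invRing_algEquiv : Nonempty (Q.InvRing K l γ ≃ₐ[K] Q.InvRing K l β) := by
  let φ : Q.InvRing K l γ →ₐ[K] Q.InvRing K l β :=
    ((r.pullback hne hl).comp (Q.InvRing K l γ).val).codRestrict _
      fun f => r.pullback_mem_invRing hne hl hloop f.2
  refine ⟨AlgEquiv.ofBijective φ ⟨fun f f' hff' => ?_, fun h => ?_⟩⟩
  · exact Subtype.ext (r.pullback_injOn_invRing hne hl hloop hlift f.2 f'.2
      (congrArg Subtype.val hff'))
  · obtain ⟨k, hk, hkh⟩ := r.contractionAlg_le_map_pullback hne hl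
      (invRing_le_contractionAlg hloop h.2)
    exact ⟨⟨k, r.mem_invRing_of_pullback_mem hne hl hlift hk (hkh.symm ▸ h.2)⟩,
      Subtype.ext hkh⟩

end Retract

end FinQuiver

namespace FinQuiver

variable {Q : FinQuiver}

lemma bil_toZ_ev (γ : Q.I → ℕ) (i0 : Q.I) :
    Q.bil (Q.toZ γ) (Q.ev i0) =
      2 * (γ i0 : ℤ) - ((∑ a : {a : Q.DA // Q.dt a = i0}, γ (Q.dh a.1) : ℕ) : ℤ) := by
  rw [← Finset.sum_subtype (Finset.univ.filter (Q.dt · = i0)) (by simp) fun a => γ (Q.dh a)]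
  simp only [bil, toZ, ev, mul_ite, mul_one, mul_zero, Finset.sum_ite_eq', Finset.mem_univ,
    if_true, Finset.sum_filter, Nat.cast_sum, Nat.cast_ite, Nat.cast_zero]

lemma dh_ne_of_sum_lt {γ : Q.I → ℕ} {i0 : Q.I}
    (hdim : ∑ a : {a : Q.DA // Q.dt a = i0}, γ (Q.dh a.1) < 2 * γ i0)
    (a : Q.DA) (ha : Q.dt a = i0) : Q.dh a ≠ i0 := by
  classical
  intro hb
  let b : {a : Q.DA // Q.dt a = i0} := ⟨a, ha⟩
  let b' : {a : Q.DA // Q.dt a = i0} := ⟨star a, (dt_star a).trans hb⟩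
  have hne : b ≠ b' := by cases a <;> simp [b, b', star]
  have hle := Finset.sum_le_univ_sum_of_nonneg (s := {b, b'})
    fun c : {a : Q.DA // Q.dt a = i0} => Nat.zero_le (γ (Q.dh c.1))
  rw [Finset.sum_pair hne, dh_star, ha, hb] at hle
  lia

end FinQuiver

open FinQuiver in
theorem stmt10_general (Q : FinQuiver) (K : Type) [Field K] [CharZero K]
    (l : Q.I → K) (α : Q.I → ℕ) (i0 : Q.I)
    (hl : l i0 = 0) (hpos : 0 < Q.bil (Q.toZ α) (Q.ev i0)) :
    (∀ x ∈ Q.MomentFiber K l α, Q.HasSFactor K α i0 x) ∧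
    Nonempty (Q.InvRing K l (fun i => α i - Q.evN i0 i) ≃ₐ[K] Q.InvRing K l α) := by
  have hdim : ∑ a : {a : Q.DA // Q.dt a = i0}, α (Q.dh a.1) < 2 * α i0 := by
    rw [bil_toZ_ev] at hpos
    lia
  have hloop := dh_ne_of_sum_lt hdim
  have hne (i : Q.I) (hi : i ≠ i0) : α i - Q.evN i0 i = α i := by simp [evN, hi]
  have hi0 : α i0 - Q.evN i0 i0 + 1 = α i0 := by
    simp only [evN, if_pos]
    lia
  let r := Retract.castLE K fun i => Nat.sub_le (α i) (Q.evN i0 i)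
  have hlift (x) (hx : x ∈ Q.MomentFiber K l α) :=
    r.exists_sameContraction_extend hi0 hne hx hl hdim
  exact ⟨fun x hx => hasSFactor_of_mem_momentFiber hx hl hloop hdim,
    (r.nonempty_invRing_algEquiv hne hl hloop hlift).map AlgEquiv.symm⟩

/-- if `λ_i = 0` and `(α,ε_i) > 0`, then every `Π^λ`-module of
dimension vector `α` (i.e. every point of `μ_α^{-1}(λ)`) has the simple module
`S_i` as a composition factor, and `N(λ, α − ε_i) ≅ N(λ,α)` as varieties. -/
theorem stmt10 (Q : FinQuiver) (K : Type) [Field K] [CharZero K] [IsAlgClosed K]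
    (l : Q.I → K) (α : Q.I → ℕ) (i0 : Q.I)
    (hl : l i0 = 0) (hpos : 0 < Q.bil (Q.toZ α) (Q.ev i0)) :
    (∀ x ∈ Q.MomentFiber K l α, Q.HasSFactor K α i0 x) ∧
    Nonempty (Q.InvRing K l (fun i => α i - Q.evN i0 i) ≃ₐ[K] Q.InvRing K l α) :=
  stmt10_general Q K l α i0 hl hpos

end
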